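/- arXiv:2106.15676 — 5 statements merged into one kernel-verified Lean document; each statement's English description precedes it below -/
import Mathlib

section
/- Let d ≥ 2, κ ≥ 1, and let A₁,…,A_κ ∈ SL(d,ℝ). For ω ∈ Σ_κ := {1,…,κ}^ℤ and n ≥ 1 write A⁽ⁿ⁾(ω) := A_{ω_{n−1}} ⋯ A_{ω_1} A_{ω_0}. Assume: (1) the closure in SL(d,ℝ) of the subgroup generated by {A₁,…,A_κ} is not compact; (2) the family (A₁,…,A_κ) is strongly projectively accessible. Then for every nonzero vector v ∈ ℝ^d there exists a residual subset 𝓡_v ⊆ Σ_κ such that for every ω ∈ 𝓡_v one has liminf_{n→∞} (1/n) log ‖A⁽ⁿ⁾(ω) v‖ < limsup_{n→∞} (1/n) log ‖A⁽ⁿ⁾(ω) v‖ (Euclidean norm on ℝ^d). -/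
open Filter Topology Metric

noncomputable section

/-- The action of a `d × d` real matrix on Euclidean space `ℝ^d`. -/
def mvec {d : ℕ} (B : Matrix (Fin d) (Fin d) ℝ) (v : EuclideanSpace ℝ (Fin d)) :
    EuclideanSpace ℝ (Fin d) :=
  Matrix.toEuclideanLin B v

/-- The random product `A⁽ⁿ⁾(ω) = A_{ω_{n-1}} ⋯ A_{ω_1} A_{ω_0}` of the matrices `A i`
along the two-sided sequence `ω`. -/
def cocycleProd {d κ : ℕ} (A : Fin κ → Matrix.SpecialLinearGroup (Fin d) ℝ)
    (ω : ℤ → Fin κ) : ℕ → Matrix.SpecialLinearGroup (Fin d) ℝ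
  | 0 => 1
  | n + 1 => A (ω n) * cocycleProd A ω n

/-- The projectivized action `g_B(v) = B·v / ‖B·v‖` on the unit sphere. -/
def projMap {d : ℕ} (B : Matrix (Fin d) (Fin d) ℝ) (v : EuclideanSpace ℝ (Fin d)) :
    EuclideanSpace ℝ (Fin d) :=
  ‖mvec B v‖⁻¹ • mvec B v

/-- The composition `g_{A_{ω_{p-1}}} ∘ ⋯ ∘ g_{A_{ω_0}}` of the projectivized maps along
a finite word `w = (ω₀, …, ω_{p-1})`. -/
def projWordComp {d κ : ℕ} (A : Fin κ → Matrix.SpecialLinearGroup (Fin d) ℝ)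
    (w : List (Fin κ)) (v : EuclideanSpace ℝ (Fin d)) : EuclideanSpace ℝ (Fin d) :=
  w.foldl (fun u i => projMap (A i : Matrix (Fin d) (Fin d) ℝ) u) v

/-- The unit sphere `S^{d-1} ⊆ ℝ^d`, a double cover of the projective space. -/
def unitSphere (d : ℕ) : Set (EuclideanSpace ℝ (Fin d)) :=
  Metric.sphere (0 : EuclideanSpace ℝ (Fin d)) 1

/-- Strong projective accessibility of the family `(A₁, …, A_κ)`, formulated on the
unit sphere: for every `ε > 0` there is `K(ε)` such that any `ε`-ball around a direction
can be mapped, by the projective action of a word of length at most `K(ε)`, onto a set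
containing a definite sub-ball of any prescribed ball of radius `δ ≤ ε`. -/
def StronglyProjectivelyAccessible {d κ : ℕ}
    (A : Fin κ → Matrix.SpecialLinearGroup (Fin d) ℝ) : Prop :=
  ∀ ε : ℝ, 0 < ε → ∃ K : ℕ, ∀ v₁ ∈ unitSphere d, ∀ v₂ ∈ unitSphere d,
    ∀ δ : ℝ, 0 < δ → δ ≤ ε →
      ∃ p ≤ K, ∃ w : List (Fin κ), w.length = p ∧ ∃ u ∈ unitSphere d,
        Metric.ball u (min (ε / 4) (δ / 2)) ∩ unitSphere d ⊆
          (projWordComp A w '' (Metric.ball v₁ ε ∩ unitSphere d)) ∩ Metric.ball v₂ δ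

/-!
Let `M n` be the largest norm of a word of length `n`. Because inverse orbits of lines are dense, no
nonzero operator `B` kills the whole orbit of a nonzero vector `u`, and by compactness `‖B‖ ‖u‖` is
recovered up to a constant by inserting a word of bounded length between `u` and `B`. Hence `M` is
supermultiplicative up to a constant, and every vector can be made to grow at the maximal rate
`s = lim (1 / n) log (M n)`.

If the growth of some vector never lagged behind `M` by more than a constant factor, then by density
of inverse orbits the same would hold for all vectors, and the condition numbers of all words would
be bounded; in `SL(d, ℝ)` this confines the generated group to a compact set. Otherwise every vector
lags behind `M` by an arbitrarily prescribed factor along some word, of bounded length by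
compactness. Iterating this, supermultiplicativity turns the lag into an exponential one, so every
vector can also be made to grow at a rate smaller than `s`. Both rates remain available after any
finite word, so a Baire generic sequence sees each of them infinitely often.
-/

section WordProducts

variable {ι G H : Type*} [Monoid G] [Monoid H]

/-- The product `A_{ω_{p-1}} ⋯ A_{ω_0}` along a finite word `(ω₀, …, ω_{p-1})`; the first letter is
the rightmost factor, so that it acts first. -/
def wordProd (A : ι → G) (w : List ι) : G :=
  (w.map A).reverse.prod

/-- The word formed by the letters `ω₀, …, ω_{n-1}`. -/
def firstLetters (ω : ℤ → ι) (n : ℕ) : List ι :=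
  List.ofFn fun i : Fin n => ω (i : ℕ)

lemma wordProd_append (A : ι → G) (w w' : List ι) :
    wordProd A (w ++ w') = wordProd A w' * wordProd A w := by
  simp [wordProd]

lemma wordProd_singleton (A : ι → G) (i : ι) : wordProd A [i] = A i := by
  simp [wordProd]

lemma wordProd_cons (A : ι → G) (i : ι) (w : List ι) :
    wordProd A (i :: w) = wordProd A w * A i := by
  simp [wordProd]

lemma map_wordProd (f : G →* H) (A : ι → G) (w : List ι) :
    f (wordProd A w) = wordProd (fun i => f (A i)) w := by
  simp [wordProd, map_list_prod, Function.comp_def]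

lemma exists_wordProd_eq_of_mem_closure {A : ι → G} {g : G}
    (hg : g ∈ Submonoid.closure (Set.range A)) : ∃ w, wordProd A w = g := by
  induction hg using Submonoid.closure_induction with
  | mem x hx =>
    obtain ⟨i, rfl⟩ := hx
    exact ⟨[i], wordProd_singleton A i⟩
  | one => exact ⟨[], rfl⟩
  | mul x y _ _ hx hy =>
    obtain ⟨w, rfl⟩ := hx
    obtain ⟨w', rfl⟩ := hy
    exact ⟨w' ++ w, wordProd_append A w' w⟩

@[simp]
lemma length_firstLetters (ω : ℤ → ι) (n : ℕ) : (firstLetters ω n).length = n := by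
  simp [firstLetters]

lemma firstLetters_succ (ω : ℤ → ι) (n : ℕ) :
    firstLetters ω (n + 1) = firstLetters ω n ++ [ω n] := by
  rw [firstLetters, List.ofFn_succ_last]
  simp [firstLetters]

end WordProducts

section Generic

variable {ι : Type*} [TopologicalSpace ι]

lemma exists_mem_firstLetters_eq_append {U : Set (ℤ → ι)} (hU : IsOpen U) {ω₀ : ℤ → ι}
    (hω₀ : ω₀ ∈ U) :
    ∃ p, ∀ w, ∃ ω ∈ U, firstLetters ω (p ++ w).length = p ++ w := by
  obtain ⟨I, u, hu, hIU⟩ := isOpen_pi_iff.1 hU ω₀ hω₀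
  obtain ⟨m, hm⟩ : ∃ m : ℕ, ∀ i ∈ I, i < m := by
    obtain ⟨b, hb⟩ := I.bddAbove
    exact ⟨(b + 1).toNat, fun i hi => by have := hb hi; lia⟩
  refine ⟨firstLetters ω₀ m, fun w => ?_⟩
  let ω : ℤ → ι := fun i => if i < m then ω₀ i else w.getD (i - m).toNat (ω₀ 0)
  refine ⟨ω, hIU fun i hi => ?_, List.ext_getElem (by simp) fun i h1 h2 => ?_⟩
  · have hωi : ω i = ω₀ i := if_pos (hm i hi)
    exact hωi ▸ (hu i hi).2
  · rw [List.getElem_append]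
    by_cases him : i < m
    · simp [firstLetters, ω, him]
    · have hlt : i - m < w.length := by
        simp only [List.length_append, length_firstLetters] at h1
        lia
      simp [firstLetters, ω, him, List.getD_eq_getElem?_getD, hlt]

variable [DiscreteTopology ι]

lemma isOpen_setOf_firstLetters (Q : List ι → Prop) (n : ℕ) :
    IsOpen {ω : ℤ → ι | Q (firstLetters ω n)} :=
  (isOpen_discrete {f : Fin n → ι | Q (List.ofFn f)}).preimage
    (f := fun (ω : ℤ → ι) (i : Fin n) => ω (i : ℕ)) (by fun_prop)

lemma eventually_residual_frequently_firstLetters {Q : List ι → Prop}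
    (hQ : ∀ (p : List ι) (k : ℕ), ∃ w, k ≤ w.length ∧ Q (p ++ w)) :
    ∀ᶠ ω in residual (ℤ → ι), ∃ᶠ n in atTop, Q (firstLetters ω n) := by
  simp only [frequently_atTop]
  refine eventually_countable_forall.2 fun k => residual_of_dense_open ?_ ?_
  · simp only [Set.ofPred_exists, Set.ofPred_and]
    exact isOpen_iUnion fun n => isOpen_const.inter (isOpen_setOf_firstLetters Q n)
  · refine dense_iff_inter_open.2 fun U hU ⟨ω₀, hω₀⟩ => ?_
    obtain ⟨p, hp⟩ := exists_mem_firstLetters_eq_append hU hω₀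
    obtain ⟨w, hkw, hw⟩ := hQ p k
    obtain ⟨ω, hωU, hω⟩ := hp w
    refine ⟨ω, hωU, (p ++ w).length, ?_, by rwa [hω]⟩
    rw [List.length_append]
    lia

end Generic

lemma liminf_lt_limsup_of_frequently {α : Type*} {f : Filter α} {x : α → ℝ} {a b C : ℝ}
    (hba : b < a) (hC : ∀ n, |x n| ≤ C) (hb : ∃ᶠ n in f, x n ≤ b) (ha : ∃ᶠ n in f, a ≤ x n) :
    liminf x f < limsup x f := by
  have hbelow : f.IsBoundedUnder (· ≥ ·) x := isBoundedUnder_of ⟨-C, fun n => (abs_le.1 (hC n)).1⟩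
  have habove : f.IsBoundedUnder (· ≤ ·) x := isBoundedUnder_of ⟨C, fun n => (abs_le.1 (hC n)).2⟩
  calc liminf x f ≤ b := liminf_le_of_frequently_le hb hbelow
    _ < a := hba
    _ ≤ limsup x f := le_limsup_of_frequently_le ha habove

lemma exists_finset_forall_le_of_isCompact {X α : Type*} [TopologicalSpace X] {K : Set X}
    (hK : IsCompact K) {f : α → X → ℝ} (hf : ∀ a, Continuous (f a))
    (hpos : ∀ x ∈ K, ∃ a, 0 < f a x) :
    ∃ (s : Finset α) (η : ℝ), 0 < η ∧ ∀ x ∈ K, ∃ a ∈ s, η ≤ f a x := by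
  classical
  obtain ⟨t, ht⟩ := hK.elim_finite_subcover (fun p : α × ℕ => {x | 1 / ((p.2 : ℝ) + 1) < f p.1 x})
    (fun p => isOpen_lt continuous_const (hf p.1)) fun x hx => by
      obtain ⟨a, ha⟩ := hpos x hx
      obtain ⟨n, hn⟩ := exists_nat_one_div_lt ha
      exact Set.mem_iUnion.2 ⟨(a, n), hn⟩
  refine ⟨t.image Prod.fst, 1 / ((t.sup Prod.snd : ℕ) + 1), by positivity, fun x hx => ?_⟩
  obtain ⟨p, hp, hpx⟩ := Set.mem_iUnion₂.1 (ht hx)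
  exact ⟨p.1, Finset.mem_image_of_mem _ hp,
    (Nat.one_div_le_one_div (Finset.le_sup hp)).trans (le_of_lt hpx)⟩

section CompactSubmonoids

variable {G : Type*} [Group G] [TopologicalSpace G] [ContinuousMul G] [T2Space G]

lemma inv_mem_of_isCompact_submonoid {S : Submonoid G} (hS : IsCompact (S : Set G)) {x : G}
    (hx : x ∈ S) : x⁻¹ ∈ S := by
  -- A compact semigroup contains an idempotent; the one in `x * S` has to be `1`.
  obtain ⟨_, ⟨y, hy, rfl⟩, hidem⟩ := exists_idempotent_in_compact_subsemigroup
    (fun r => continuous_mul_const r) ((x * ·) '' (S : Set G)) ⟨_, _, hx, rfl⟩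
    (hS.image (continuous_const_mul x)) (by
      rintro _ ⟨y, hy, rfl⟩ _ ⟨z, hz, rfl⟩
      exact ⟨y * (x * z), mul_mem hy (mul_mem hx hz), by simp only [mul_assoc]⟩)
  rw [inv_eq_of_mul_eq_one_right (mul_eq_left.1 hidem)]
  exact hy

lemma subgroupClosure_subset_closure_submonoidClosure {s : Set G}
    (hs : IsCompact (closure (Submonoid.closure s : Set G))) :
    (Subgroup.closure s : Set G) ⊆ closure (Submonoid.closure s : Set G) := by
  intro g hg
  change g ∈ (Submonoid.closure s).topologicalClosure
  induction hg using Subgroup.closure_induction with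
  | mem x hx => exact Submonoid.le_topologicalClosure _ (Submonoid.subset_closure hx)
  | one => exact one_mem _
  | mul x y _ _ hx hy => exact mul_mem hx hy
  | inv x _ hx => exact inv_mem_of_isCompact_submonoid hs hx

end CompactSubmonoids

section LinearWords

variable {ι E : Type*} [NormedAddCommGroup E] [NormedSpace ℝ E] (A : ι → E ≃L[ℝ] E)

/-- The condition number `‖f‖ ‖f⁻¹‖` of an invertible operator, measuring how far `f` is
from being a similarity. -/
def conditionNumber (f : E ≃L[ℝ] E) : ℝ :=
  ‖(f : E →L[ℝ] E)‖ * ‖(f.symm : E →L[ℝ] E)‖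

/-- The largest operator norm of a product along a word of length `n`. -/
def maxNorm (n : ℕ) : ℝ :=
  ⨆ w : List.Vector ι n, ‖(wordProd A w.1).toContinuousLinearMap‖

/-- The semigroup generated by the inverses `A_i⁻¹` acts minimally on the projective space of `E`:
every inverse orbit of a line is dense. -/
def InverseProjectivelyMinimal : Prop :=
  ∀ y : E, y ≠ 0 → Dense (Set.range fun p : ℝ × List ι => p.1 • (wordProd A p.2).symm y)

variable {A}

lemma wordProd_nil_apply (v : E) : wordProd A [] v = v := rfl

lemma wordProd_append_apply (w w' : List ι) (v : E) :
    wordProd A (w ++ w') v = wordProd A w' (wordProd A w v) := by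
  rw [wordProd_append]
  rfl

lemma norm_wordProd_le_pow {L : ℝ} (hL : 0 ≤ L) (hA : ∀ i, ‖(A i : E →L[ℝ] E)‖ ≤ L)
    (w : List ι) : ‖(wordProd A w).toContinuousLinearMap‖ ≤ L ^ w.length := by
  induction w with
  | nil => exact ContinuousLinearMap.norm_id_le.trans_eq (pow_zero L).symm
  | cons i w ih =>
    rw [wordProd_cons, ContinuousLinearEquiv.toContinuousLinearMap_mul, List.length_cons, pow_succ]
    exact (norm_mul_le _ _).trans (mul_le_mul ih (hA i) (norm_nonneg _) (pow_nonneg hL _))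

lemma norm_symm_wordProd_le_pow {L : ℝ} (hL : 0 ≤ L)
    (hA : ∀ i, ‖((A i).symm : E →L[ℝ] E)‖ ≤ L) (w : List ι) :
    ‖(wordProd A w).symm.toContinuousLinearMap‖ ≤ L ^ w.length := by
  induction w with
  | nil => exact ContinuousLinearMap.norm_id_le.trans_eq (pow_zero L).symm
  | cons i w ih =>
    have hsymm : (wordProd A (i :: w)).symm.toContinuousLinearMap =
        ((A i).symm : E →L[ℝ] E) * (wordProd A w).symm.toContinuousLinearMap := by
      rw [wordProd_cons]
      rfl
    rw [hsymm, List.length_cons, pow_succ']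
    exact (norm_mul_le _ _).trans (mul_le_mul (hA i) ih (norm_nonneg _) hL)

lemma inverseProjectivelyMinimal_of_forall_norm_eq_one
    (h : ∀ x y : E, ‖x‖ = 1 → ‖y‖ = 1 → ∀ ε > 0, ∃ (t : ℝ) (w : List ι),
      ‖x - t • (wordProd A w).symm y‖ < ε) : InverseProjectivelyMinimal A := by
  intro y hy
  refine Metric.dense_iff.2 fun x ε hε => ?_
  rcases eq_or_ne x 0 with rfl | hx
  · exact ⟨_, by simpa using hε, ⟨(0, []), rfl⟩⟩
  have hx0 : 0 < ‖x‖ := norm_pos_iff.2 hx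
  obtain ⟨t, w, htw⟩ := h (‖x‖⁻¹ • x) (‖y‖⁻¹ • y) (norm_smul_inv_norm hx) (norm_smul_inv_norm hy)
    (ε / ‖x‖) (by positivity)
  refine ⟨(‖x‖ * t * ‖y‖⁻¹) • (wordProd A w).symm y, ?_, ⟨(‖x‖ * t * ‖y‖⁻¹, w), rfl⟩⟩
  have hscale : x - (‖x‖ * t * ‖y‖⁻¹) • (wordProd A w).symm y =
      ‖x‖ • (‖x‖⁻¹ • x - t • (wordProd A w).symm (‖y‖⁻¹ • y)) := by
    rw [map_smul, smul_sub, smul_inv_smul₀ hx0.ne', smul_smul, smul_smul]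
  rw [mem_ball_iff_norm', hscale, norm_smul, norm_norm]
  exact (lt_div_iff₀' hx0).1 htw

variable [Finite ι]

variable (A) in
lemma exists_norm_wordProd_le_pow :
    ∃ L : ℝ, 1 ≤ L ∧ ∀ w : List ι, ‖(wordProd A w).toContinuousLinearMap‖ ≤ L ^ w.length ∧
      ‖(wordProd A w).symm.toContinuousLinearMap‖ ≤ L ^ w.length := by
  obtain ⟨L₁, h₁⟩ := Finite.bddAbove_range fun i => ‖(A i : E →L[ℝ] E)‖
  obtain ⟨L₂, h₂⟩ := Finite.bddAbove_range fun i => ‖((A i).symm : E →L[ℝ] E)‖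
  rw [mem_upperBounds, Set.forall_mem_range] at h₁ h₂
  have hL : 1 ≤ max 1 (max L₁ L₂) := le_max_left _ _
  refine ⟨max 1 (max L₁ L₂), hL, fun w => ⟨norm_wordProd_le_pow (by linarith) (fun i => ?_) w,
    norm_symm_wordProd_le_pow (by linarith) (fun i => ?_) w⟩⟩
  · exact le_max_of_le_right (le_max_of_le_left (h₁ i))
  · exact le_max_of_le_right (le_max_of_le_right (h₂ i))

lemma exists_abs_log_norm_wordProd_le {v : E} (hv : v ≠ 0) :
    ∃ C, ∀ w : List ι, |(w.length : ℝ)⁻¹ * Real.log ‖wordProd A w v‖| ≤ C := by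
  obtain ⟨L, hL, hLw⟩ := exists_norm_wordProd_le_pow A
  refine ⟨Real.log L + |Real.log ‖v‖|, fun w => ?_⟩
  have hlogL := Real.log_nonneg hL
  rcases w.length.eq_zero_or_pos with hw | hw
  · simpa [hw] using by positivity
  have hw1 : (1 : ℝ) ≤ w.length := by exact_mod_cast hw
  have hv0 : 0 < ‖v‖ := norm_pos_iff.2 hv
  have hwv0 : 0 < ‖wordProd A w v‖ := norm_pos_iff.2 (by simpa using hv)
  have hLpow : L ^ w.length ≠ 0 := (pow_pos (by linarith) _).ne'
  have hupper := Real.log_le_log hwv0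
    ((wordProd A w).toContinuousLinearMap.le_of_opNorm_le (hLw w).1 v)
  have hlower := Real.log_le_log hv0 (by
    simpa using (wordProd A w).symm.toContinuousLinearMap.le_of_opNorm_le (hLw w).2
      (wordProd A w v))
  rw [Real.log_mul hLpow hv0.ne', Real.log_pow] at hupper
  rw [Real.log_mul hLpow hwv0.ne', Real.log_pow] at hlower
  rw [abs_mul, abs_inv, Nat.abs_cast, inv_mul_le_iff₀ (by linarith), abs_le]
  have hlen : |Real.log ‖v‖| ≤ w.length * |Real.log ‖v‖| :=
    le_mul_of_one_le_left (abs_nonneg _) hw1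
  have habs := abs_le.1 (le_refl |Real.log ‖v‖|)
  constructor <;> linarith

lemma norm_wordProd_le_maxNorm {w : List ι} {n : ℕ} (hw : w.length = n) :
    ‖(wordProd A w).toContinuousLinearMap‖ ≤ maxNorm A n :=
  le_ciSup (f := fun u : List.Vector ι n => ‖(wordProd A u.1).toContinuousLinearMap‖)
    (Set.finite_range _).bddAbove ⟨w, hw⟩

lemma norm_wordProd_apply_le_maxNorm (w : List ι) (v : E) :
    ‖wordProd A w v‖ ≤ maxNorm A w.length * ‖v‖ :=
  (wordProd A w).toContinuousLinearMap.le_of_opNorm_le (norm_wordProd_le_maxNorm rfl) v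

lemma mul_maxNorm_le_norm_wordProd_of_norm_sub_le {w : List ι} {u z : E} {τ : ℝ}
    (hlow : τ * maxNorm A w.length * ‖u‖ ≤ ‖wordProd A w u‖) (hz : ‖z - u‖ ≤ τ / 2 * ‖u‖) :
    τ / 2 * maxNorm A w.length * ‖u‖ ≤ ‖wordProd A w z‖ := by
  set M := maxNorm A w.length
  have hM : 0 ≤ M := (norm_nonneg _).trans (norm_wordProd_le_maxNorm (A := A) (w := w) rfl)
  have hdiff : ‖wordProd A w u - wordProd A w z‖ ≤ M * (τ / 2 * ‖u‖) :=
    calc ‖wordProd A w u - wordProd A w z‖ = ‖wordProd A w (z - u)‖ := by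
          rw [map_sub, norm_sub_rev]
      _ ≤ M * ‖z - u‖ := norm_wordProd_apply_le_maxNorm w _
      _ ≤ M * (τ / 2 * ‖u‖) := by gcongr
  linarith [norm_sub_norm_le (wordProd A w u) (wordProd A w z)]

variable [Nonempty ι]

variable (A) in
lemma exists_norm_wordProd_eq_maxNorm (n : ℕ) :
    ∃ w : List ι, w.length = n ∧ ‖(wordProd A w).toContinuousLinearMap‖ = maxNorm A n := by
  have : Nonempty (List.Vector ι n) := ⟨List.Vector.replicate n (Classical.arbitrary ι)⟩
  obtain ⟨w, hw⟩ := exists_eq_ciSup_of_finite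
    (f := fun u : List.Vector ι n => ‖(wordProd A u.1).toContinuousLinearMap‖)
  exact ⟨w.1, w.2, hw⟩

variable (A) in
lemma maxNorm_add_le (m n : ℕ) : maxNorm A (m + n) ≤ maxNorm A m * maxNorm A n := by
  obtain ⟨w, hw, hnorm⟩ := exists_norm_wordProd_eq_maxNorm A (m + n)
  have htake : (w.take m).length = m := by simp [hw]
  have hdrop : (w.drop m).length = n := by simp [hw]
  calc maxNorm A (m + n)
      = ‖(wordProd A (w.drop m)).toContinuousLinearMap *
          (wordProd A (w.take m)).toContinuousLinearMap‖ := by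
        rw [← hnorm, ← ContinuousLinearEquiv.toContinuousLinearMap_mul, ← wordProd_append,
          List.take_append_drop]
    _ ≤ ‖(wordProd A (w.take m)).toContinuousLinearMap‖ *
          ‖(wordProd A (w.drop m)).toContinuousLinearMap‖ := by
        rw [mul_comm]
        exact norm_mul_le _ _
    _ ≤ maxNorm A m * maxNorm A n :=
        mul_le_mul (norm_wordProd_le_maxNorm htake) (norm_wordProd_le_maxNorm hdrop)
          (norm_nonneg _) ((norm_nonneg _).trans (norm_wordProd_le_maxNorm htake))

variable (A) in
lemma maxNorm_zero [Nontrivial E] : maxNorm A 0 = 1 := by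
  obtain ⟨w, hw, hnorm⟩ := exists_norm_wordProd_eq_maxNorm A 0
  rw [← hnorm, List.eq_nil_of_length_eq_zero hw]
  exact ContinuousLinearMap.norm_id

variable (A) in
lemma maxNorm_pos [Nontrivial E] (n : ℕ) : 0 < maxNorm A n := by
  obtain ⟨w, -, hw⟩ := exists_norm_wordProd_eq_maxNorm A n
  exact hw ▸ (wordProd A w).norm_pos

lemma conditionNumber_wordProd_le_inv [Nontrivial E] {w : List ι} {σ : ℝ} (hσ : 0 < σ)
    (hlow : ∀ x, σ * maxNorm A w.length * ‖x‖ ≤ ‖wordProd A w x‖) :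
    conditionNumber (wordProd A w) ≤ σ⁻¹ := by
  have hM := maxNorm_pos A w.length
  have hsymm : ‖(wordProd A w).symm.toContinuousLinearMap‖ ≤ (σ * maxNorm A w.length)⁻¹ := by
    refine ContinuousLinearMap.opNorm_le_bound _ (by positivity) fun y => ?_
    rw [le_inv_mul_iff₀ (by positivity)]
    simpa using hlow ((wordProd A w).symm y)
  calc conditionNumber (wordProd A w)
      ≤ maxNorm A w.length * (σ * maxNorm A w.length)⁻¹ :=
        mul_le_mul (norm_wordProd_le_maxNorm rfl) hsymm (norm_nonneg _) hM.le
    _ = σ⁻¹ := by field_simp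

variable (A) in
lemma subadditive_log_maxNorm [Nontrivial E] : Subadditive fun n => Real.log (maxNorm A n) :=
  fun m n => by
    rw [← Real.log_mul (maxNorm_pos A m).ne' (maxNorm_pos A n).ne']
    exact Real.log_le_log (maxNorm_pos A _) (maxNorm_add_le A m n)

variable (A) in
lemma exists_inv_pow_le_maxNorm_le_pow [Nontrivial E] :
    ∃ L : ℝ, 1 ≤ L ∧ ∀ n, (L ^ n)⁻¹ ≤ maxNorm A n ∧ maxNorm A n ≤ L ^ n := by
  obtain ⟨L, hL, hLw⟩ := exists_norm_wordProd_le_pow A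
  refine ⟨L, hL, fun n => ?_⟩
  obtain ⟨w, rfl, hw⟩ := exists_norm_wordProd_eq_maxNorm A n
  rw [← hw]
  refine ⟨?_, (hLw w).1⟩
  rw [inv_le_iff_one_le_mul₀ (pow_pos (by linarith) _)]
  calc (1 : ℝ)
      ≤ ‖(wordProd A w).toContinuousLinearMap‖ * ‖(wordProd A w).symm.toContinuousLinearMap‖ :=
        (wordProd A w).one_le_norm_mul_norm_symm
    _ ≤ ‖(wordProd A w).toContinuousLinearMap‖ * L ^ w.length := by
        gcongr
        exact (hLw w).2

variable (A) in
lemma bddBelow_log_maxNorm_div [Nontrivial E] :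
    BddBelow (Set.range fun n : ℕ => Real.log (maxNorm A n) / n) := by
  obtain ⟨L, hL, hLn⟩ := exists_inv_pow_le_maxNorm_le_pow A
  refine ⟨-Real.log L, ?_⟩
  rintro _ ⟨n, rfl⟩
  rcases n.eq_zero_or_pos with rfl | hn
  · simpa using Real.log_nonneg hL
  have hlog := Real.log_le_log (inv_pos.2 (pow_pos (by linarith) n)) (hLn n).1
  rw [Real.log_inv, Real.log_pow] at hlog
  rw [le_div_iff₀ (by exact_mod_cast hn)]
  linarith

lemma lim_mul_le_log_maxNorm [Nontrivial E] (n : ℕ) :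
    (subadditive_log_maxNorm A).lim * n ≤ Real.log (maxNorm A n) := by
  rcases n.eq_zero_or_pos with rfl | hn
  · simp [maxNorm_zero]
  · rw [← le_div_iff₀ (by exact_mod_cast hn)]
    exact (subadditive_log_maxNorm A).lim_le_div (bddBelow_log_maxNorm_div A) hn.ne'

end LinearWords

namespace InverseProjectivelyMinimal

variable {ι E : Type*} [NormedAddCommGroup E] [NormedSpace ℝ E] [FiniteDimensional ℝ E]
  {A : ι → E ≃L[ℝ] E}

lemma span_range_wordProd_eq_top (hA : InverseProjectivelyMinimal A) {u : E} (hu : u ≠ 0) :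
    Submodule.span ℝ (Set.range fun w => wordProd A w u) = ⊤ := by
  set V := Submodule.span ℝ (Set.range fun w => wordProd A w u) with hV
  have hmap (w : List ι) : V.map (wordProd A w).toLinearEquiv.toLinearMap = V := by
    refine Submodule.eq_of_le_of_finrank_eq ?_ (LinearEquiv.finrank_map_eq _ V)
    rw [hV, Submodule.map_span_le]
    rintro _ ⟨w', rfl⟩
    exact Submodule.subset_span ⟨w' ++ w, wordProd_append_apply w' w u⟩
  have horbit : (Set.range fun p : ℝ × List ι => p.1 • (wordProd A p.2).symm u) ⊆ V := by
    rintro _ ⟨⟨t, w⟩, rfl⟩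
    have hu_map : u ∈ V.map (wordProd A w).toLinearEquiv.toLinearMap :=
      (hmap w).symm ▸ Submodule.subset_span ⟨[], rfl⟩
    obtain ⟨x, hx, hxu⟩ := hu_map
    have hxsymm : (wordProd A w).symm u = x := (wordProd A w).symm_apply_eq.2 hxu.symm
    exact V.smul_mem t (hxsymm ▸ hx)
  exact eq_top_iff.2 fun x _ =>
    closure_minimal horbit V.closed_of_finiteDimensional (hA u hu x)

lemma exists_forall_mul_le_norm_apply_wordProd (hA : InverseProjectivelyMinimal A) :
    ∃ (N : ℕ) (η : ℝ), 0 < η ∧ ∀ (B : E →L[ℝ] E) (u : E),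
      ∃ w : List ι, w.length ≤ N ∧ η * ‖B‖ * ‖u‖ ≤ ‖B (wordProd A w u)‖ := by
  obtain ⟨s, η, hη, hs⟩ := exists_finset_forall_le_of_isCompact
    ((isCompact_sphere (0 : E →L[ℝ] E) 1).prod (isCompact_sphere (0 : E) 1))
    (f := fun (w : List ι) p => ‖p.1 (wordProd A w p.2)‖) (fun w => by fun_prop) (by
      rintro ⟨B, u⟩ ⟨hB, hu⟩
      by_contra! hzero
      refine ne_zero_of_mem_unit_sphere ⟨B, hB⟩ (ContinuousLinearMap.coe_injective ?_)
      refine LinearMap.ext_on_range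
        (hA.span_range_wordProd_eq_top (ne_zero_of_mem_unit_sphere ⟨u, hu⟩)) fun w => ?_
      exact norm_le_zero_iff.1 (hzero w))
  refine ⟨s.sup List.length, η, hη, fun B u => ?_⟩
  rcases eq_or_ne B 0 with rfl | hB
  · exact ⟨[], by simp, by simp⟩
  rcases eq_or_ne u 0 with rfl | hu
  · exact ⟨[], by simp, by simp⟩
  obtain ⟨w, hw, hle⟩ := hs (‖B‖⁻¹ • B, ‖u‖⁻¹ • u)
    ⟨by simp [norm_smul, hB], by simp [norm_smul, hu]⟩
  refine ⟨w, Finset.le_sup (f := List.length) hw, ?_⟩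
  simp only [map_smul, smul_apply, norm_smul, norm_inv, norm_norm] at hle
  rw [← mul_assoc, ← mul_inv, le_inv_mul_iff₀ (by positivity)] at hle
  linarith

variable [Finite ι] [Nonempty ι]

lemma exists_forall_mul_maxNorm_le_norm_wordProd (hA : InverseProjectivelyMinimal A) :
    ∃ (N : ℕ) (η : ℝ), 0 < η ∧ ∀ (n : ℕ) (u : E), ∃ w : List ι,
      n ≤ w.length ∧ w.length ≤ n + N ∧ η * maxNorm A n * ‖u‖ ≤ ‖wordProd A w u‖ := by
  obtain ⟨N, η, hη, h⟩ := hA.exists_forall_mul_le_norm_apply_wordProd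
  refine ⟨N, η, hη, fun n u => ?_⟩
  obtain ⟨w', hw', hnorm⟩ := exists_norm_wordProd_eq_maxNorm A n
  obtain ⟨w, hw, hle⟩ := h (wordProd A w').toContinuousLinearMap u
  rw [hnorm] at hle
  refine ⟨w ++ w', ?_, ?_, by rwa [wordProd_append_apply]⟩ <;> rw [List.length_append] <;> lia

variable [Nontrivial E]

lemma exists_mul_maxNorm_mul_maxNorm_le (hA : InverseProjectivelyMinimal A) :
    ∃ c, 0 < c ∧ ∀ m n, c * (maxNorm A m * maxNorm A n) ≤ maxNorm A (m + n) := by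
  obtain ⟨N, η, hη, h⟩ := hA.exists_forall_mul_le_norm_apply_wordProd
  obtain ⟨L, hL, hLn⟩ := exists_inv_pow_le_maxNorm_le_pow A
  have hLN : 0 < L ^ N := pow_pos (by linarith) N
  refine ⟨η / L ^ N, by positivity, fun m n => ?_⟩
  obtain ⟨w₁, rfl, hw₁⟩ := exists_norm_wordProd_eq_maxNorm A m
  obtain ⟨w₂, rfl, hw₂⟩ := exists_norm_wordProd_eq_maxNorm A n
  set M := maxNorm A (w₁.length + w₂.length)
  have hM : 0 < M := maxNorm_pos A _
  have hM₂ := maxNorm_pos A w₂.length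
  have hbound (x : E) :
      η * maxNorm A w₂.length * ‖wordProd A w₁ x‖ ≤ L ^ N * M * ‖x‖ := by
    obtain ⟨w, hw, hle⟩ := h (wordProd A w₂).toContinuousLinearMap (wordProd A w₁ x)
    have hmax : maxNorm A (w₁ ++ w ++ w₂).length ≤ L ^ N * M :=
      calc maxNorm A (w₁ ++ w ++ w₂).length = maxNorm A (w.length + (w₁.length + w₂.length)) := by
            simp only [List.length_append]
            ring_nf
        _ ≤ maxNorm A w.length * M := maxNorm_add_le A _ _
        _ ≤ L ^ N * M := by
            gcongr
            exact (hLn _).2.trans (pow_le_pow_right₀ hL hw)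
    calc η * maxNorm A w₂.length * ‖wordProd A w₁ x‖
        ≤ ‖wordProd A (w₁ ++ w ++ w₂) x‖ := by
          rw [wordProd_append_apply, wordProd_append_apply, ← hw₂]
          exact hle
      _ ≤ L ^ N * M * ‖x‖ := (norm_wordProd_apply_le_maxNorm _ x).trans (by gcongr)
  have hnorm : maxNorm A w₁.length ≤ L ^ N * M / (η * maxNorm A w₂.length) := by
    rw [← hw₁]
    refine ContinuousLinearMap.opNorm_le_bound _ (by positivity) fun x => ?_
    rw [div_mul_eq_mul_div, le_div_iff₀' (by positivity)]
    exact hbound x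
  rw [le_div_iff₀' (by positivity)] at hnorm
  rw [div_mul_eq_mul_div, div_le_iff₀' hLN]
  linarith

/-- The inverse orbit of any `x` comes close to `u`, so a lower bound along all words for `u`
spreads to a lower bound for `x`. -/
lemma exists_forall_mul_maxNorm_le_of_forall_mul_maxNorm_le (hA : InverseProjectivelyMinimal A)
    {u : E} (hu : u ≠ 0) {τ : ℝ} (hτ : 0 < τ)
    (hlow : ∀ w, τ * maxNorm A w.length * ‖u‖ ≤ ‖wordProd A w u‖) :
    ∃ σ, 0 < σ ∧ ∀ w x, σ * maxNorm A w.length * ‖x‖ ≤ ‖wordProd A w x‖ := by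
  obtain ⟨c, hc, hsuper⟩ := hA.exists_mul_maxNorm_mul_maxNorm_le
  refine ⟨c * τ / (2 + τ), by positivity, fun w x => ?_⟩
  rcases eq_or_ne x 0 with rfl | hx
  · simp
  obtain ⟨_, ⟨⟨t, w'⟩, rfl⟩, hz⟩ := (hA x hx).exists_mem_open (isOpen_ball (x := u))
    ⟨u, mem_ball_self (by positivity : 0 < τ / 2 * ‖u‖)⟩
  set z := t • (wordProd A w').symm x with hzdef
  rw [mem_ball_iff_norm] at hz
  have hw'z : wordProd A w' z = t • x := by simp [hzdef]
  have hlower : τ / 2 * (c * (maxNorm A w'.length * maxNorm A w.length)) * ‖u‖ ≤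
      |t| * ‖wordProd A w x‖ :=
    calc τ / 2 * (c * (maxNorm A w'.length * maxNorm A w.length)) * ‖u‖
        ≤ τ / 2 * maxNorm A (w' ++ w).length * ‖u‖ := by
          gcongr
          rw [List.length_append]
          exact hsuper _ _
      _ ≤ ‖wordProd A (w' ++ w) z‖ :=
          mul_maxNorm_le_norm_wordProd_of_norm_sub_le (hlow _) hz.le
      _ = |t| * ‖wordProd A w x‖ := by
          rw [wordProd_append_apply, hw'z, map_smul, norm_smul, Real.norm_eq_abs]
  have hupper : |t| * ‖x‖ ≤ maxNorm A w'.length * ((1 + τ / 2) * ‖u‖) :=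
    calc |t| * ‖x‖ = ‖wordProd A w' z‖ := by rw [hw'z, norm_smul, Real.norm_eq_abs]
      _ ≤ maxNorm A w'.length * ‖z‖ := norm_wordProd_apply_le_maxNorm w' z
      _ ≤ maxNorm A w'.length * ((1 + τ / 2) * ‖u‖) := by
          gcongr
          · exact (maxNorm_pos A _).le
          · linarith [norm_le_norm_add_norm_sub' z u]
  have hM' := maxNorm_pos A w'.length
  have hscaled : (maxNorm A w'.length * ‖u‖ / 2) * (c * τ * maxNorm A w.length * ‖x‖) ≤
      (maxNorm A w'.length * ‖u‖ / 2) * ((2 + τ) * ‖wordProd A w x‖) := by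
    linarith [mul_le_mul_of_nonneg_right hlower (norm_nonneg x),
      mul_le_mul_of_nonneg_right hupper (norm_nonneg (wordProd A w x))]
  have hle := le_of_mul_le_mul_left hscaled (by positivity)
  rw [div_mul_eq_mul_div, div_mul_eq_mul_div, div_le_iff₀' (by positivity)]
  exact hle

lemma exists_lt_log_norm_wordProd_append (hA : InverseProjectivelyMinimal A) {a : ℝ}
    (ha : a < (subadditive_log_maxNorm A).lim) {v : E} (hv : v ≠ 0) (p : List ι) (k : ℕ) :
    ∃ w, k ≤ w.length ∧ a * (p ++ w).length < Real.log ‖wordProd A (p ++ w) v‖ := by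
  obtain ⟨N, η, hη, h⟩ := hA.exists_forall_mul_maxNorm_le_norm_wordProd
  set s := (subadditive_log_maxNorm A).lim
  have hpv : 0 < ‖wordProd A p v‖ := norm_pos_iff.2 (by simpa using hv)
  obtain ⟨m, hm⟩ := exists_nat_gt
    ((a * p.length + |a| * N - Real.log η - Real.log ‖wordProd A p v‖) / (s - a))
  obtain ⟨n, hkn, hmn⟩ : ∃ n, k ≤ n ∧ m ≤ n := ⟨max k m, le_max_left k m, le_max_right k m⟩
  obtain ⟨w, hnw, hwN, hw⟩ := h n (wordProd A p v)
  refine ⟨w, hkn.trans hnw, ?_⟩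
  rw [div_lt_iff₀ (sub_pos.2 ha)] at hm
  have hgap : m * (s - a) ≤ n * (s - a) :=
    mul_le_mul_of_nonneg_right (by exact_mod_cast hmn) (sub_pos.2 ha).le
  have hexcess : a * (w.length - n) ≤ |a| * N := by
    have hdiff : |(w.length - n : ℝ)| ≤ N := by
      rw [← Nat.cast_sub hnw, Nat.abs_cast]
      exact_mod_cast Nat.sub_le_iff_le_add'.2 hwN
    exact (le_abs_self _).trans (abs_mul a _ ▸ mul_le_mul_of_nonneg_left hdiff (abs_nonneg a))
  have hM := maxNorm_pos A n
  have hlog := Real.log_le_log (by positivity) hw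
  rw [Real.log_mul (by positivity) hpv.ne', Real.log_mul hη.ne' hM.ne'] at hlog
  rw [wordProd_append_apply, List.length_append, Nat.cast_add]
  linarith [lim_mul_le_log_maxNorm (A := A) n]

variable (hA : InverseProjectivelyMinimal A)
  (hunb : ¬ BddAbove (Set.range fun w => conditionNumber (wordProd A w)))
include hA hunb

lemma exists_norm_wordProd_lt {u : E} (hu : u ≠ 0) {τ : ℝ} (hτ : 0 < τ) :
    ∃ w, ‖wordProd A w u‖ < τ * maxNorm A w.length * ‖u‖ := by
  by_contra! hlow
  obtain ⟨σ, hσ, hbound⟩ := hA.exists_forall_mul_maxNorm_le_of_forall_mul_maxNorm_le hu hτ hlow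
  refine hunb ⟨σ⁻¹, ?_⟩
  rintro _ ⟨w, rfl⟩
  exact conditionNumber_wordProd_le_inv hσ (hbound w)

lemma exists_forall_exists_norm_wordProd_lt {τ : ℝ} (hτ : 0 < τ) :
    ∃ N, ∀ u : E, u ≠ 0 → ∃ w : List ι, w.length ≤ N ∧
      ‖wordProd A w u‖ < τ * maxNorm A w.length * ‖u‖ := by
  obtain ⟨s, η, hη, hs⟩ := exists_finset_forall_le_of_isCompact (isCompact_sphere (0 : E) 1)
    (f := fun (w : List ι) u => τ * maxNorm A w.length * ‖u‖ - ‖wordProd A w u‖)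
    (fun w => by fun_prop) fun u hu => by
      simpa only [sub_pos] using
        hA.exists_norm_wordProd_lt hunb (ne_zero_of_mem_unit_sphere ⟨u, hu⟩) hτ
  refine ⟨s.sup List.length, fun u hu => ?_⟩
  obtain ⟨w, hw, hle⟩ := hs (‖u‖⁻¹ • u) (by simp [norm_smul, hu])
  refine ⟨w, Finset.le_sup (f := List.length) hw, ?_⟩
  have hlt := sub_pos.1 (hη.trans_le hle)
  rw [map_smul, norm_smul, norm_smul, norm_inv, norm_norm, mul_left_comm] at hlt
  exact lt_of_mul_lt_mul_left hlt (by positivity)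

lemma exists_forall_exists_norm_wordProd_append_le_half :
    ∃ N, ∀ (w : List ι) (u : E), u ≠ 0 → ∃ w', w' ≠ [] ∧ w'.length ≤ N ∧
      ‖wordProd A (w ++ w') u‖ * maxNorm A w.length ≤
        1 / 2 * maxNorm A (w ++ w').length * ‖wordProd A w u‖ := by
  obtain ⟨γ, hγ, hsuper⟩ := hA.exists_mul_maxNorm_mul_maxNorm_le
  obtain ⟨N, hN⟩ := hA.exists_forall_exists_norm_wordProd_lt hunb (half_pos hγ)
  refine ⟨N, fun w u hu => ?_⟩
  obtain ⟨w', hw'N, hw'⟩ := hN (wordProd A w u) (by simpa using hu)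
  refine ⟨w', ?_, hw'N, ?_⟩
  · rintro rfl
    have hγ1 : γ ≤ 1 := by simpa only [maxNorm_zero, mul_one, add_zero] using hsuper 0 0
    rw [wordProd_nil_apply, List.length_nil, maxNorm_zero] at hw'
    nlinarith [norm_nonneg (wordProd A w u)]
  · have hM := maxNorm_pos A w.length
    rw [wordProd_append_apply, List.length_append]
    calc ‖wordProd A w' (wordProd A w u)‖ * maxNorm A w.length
        ≤ γ / 2 * maxNorm A w'.length * ‖wordProd A w u‖ * maxNorm A w.length := by gcongr
      _ = 1 / 2 * (γ * (maxNorm A w.length * maxNorm A w'.length)) * ‖wordProd A w u‖ := by ring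
      _ ≤ 1 / 2 * maxNorm A (w.length + w'.length) * ‖wordProd A w u‖ := by
          gcongr
          exact hsuper _ _

lemma exists_norm_wordProd_le_exp_neg :
    ∃ c, 0 < c ∧ ∀ u : E, u ≠ 0 → ∀ k : ℕ, ∃ w : List ι, k ≤ w.length ∧
      ‖wordProd A w u‖ ≤ Real.exp (-c * w.length) * maxNorm A w.length * ‖u‖ := by
  obtain ⟨N, hN⟩ := hA.exists_forall_exists_norm_wordProd_append_le_half hunb
  set c := Real.log 2 / (N + 1) with hc
  have hhalf {l : ℕ} (hl : l ≤ N) : 1 / 2 ≤ Real.exp (-c * l) := by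
    rw [one_div, ← Real.exp_log two_pos, ← Real.exp_neg, Real.exp_le_exp, neg_mul, neg_le_neg_iff,
      hc, div_mul_eq_mul_div, div_le_iff₀ (by positivity)]
    gcongr
    exact_mod_cast hl.trans N.le_succ
  refine ⟨c, by positivity, fun u hu k => ?_⟩
  induction k with
  | zero => exact ⟨[], le_rfl, by simp [maxNorm_zero, wordProd_nil_apply]⟩
  | succ k ih =>
    obtain ⟨w, hkw, hw⟩ := ih
    obtain ⟨w', hw'0, hw'N, hw'⟩ := hN w u hu
    refine ⟨w ++ w', ?_, ?_⟩
    · have := List.length_pos_of_ne_nil hw'0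
      rw [List.length_append]
      lia
    have hM := maxNorm_pos A w.length
    have hM'' := maxNorm_pos A (w ++ w').length
    refine le_of_mul_le_mul_right ?_ hM
    calc ‖wordProd A (w ++ w') u‖ * maxNorm A w.length
        ≤ 1 / 2 * maxNorm A (w ++ w').length * ‖wordProd A w u‖ := hw'
      _ ≤ Real.exp (-c * w'.length) * maxNorm A (w ++ w').length *
            (Real.exp (-c * w.length) * maxNorm A w.length * ‖u‖) := by
          gcongr
          exact hhalf hw'N
      _ = Real.exp (-c * w'.length + -c * w.length) * maxNorm A (w ++ w').length * ‖u‖ *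
            maxNorm A w.length := by
          rw [Real.exp_add]
          ring
      _ = Real.exp (-c * (w ++ w').length) * maxNorm A (w ++ w').length * ‖u‖ *
            maxNorm A w.length := by
          rw [← mul_add, List.length_append, Nat.cast_add, add_comm (w'.length : ℝ)]

lemma exists_lt_lim_and_log_norm_wordProd_append_lt :
    ∃ b < (subadditive_log_maxNorm A).lim, ∀ v : E, v ≠ 0 → ∀ (p : List ι) (k : ℕ),
      ∃ w, k ≤ w.length ∧ Real.log ‖wordProd A (p ++ w) v‖ < b * (p ++ w).length := by
  obtain ⟨c, hc, h⟩ := hA.exists_norm_wordProd_le_exp_neg hunb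
  set s := (subadditive_log_maxNorm A).lim
  refine ⟨s - c / 2, by linarith, fun v hv p k => ?_⟩
  have hpv : 0 < ‖wordProd A p v‖ := norm_pos_iff.2 (by simpa using hv)
  have hevent : ∀ᶠ n : ℕ in atTop, Real.log (maxNorm A n) / n < s + c / 4 :=
    ((subadditive_log_maxNorm A).tendsto_lim (bddBelow_log_maxNorm_div A)).eventually_lt_const
      (by linarith)
  obtain ⟨n₀, hn₀⟩ := eventually_atTop.1 hevent
  obtain ⟨m, hm⟩ := exists_nat_gt
    ((Real.log ‖wordProd A p v‖ - (s - c / 2) * p.length) / (c / 4))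
  obtain ⟨w, hkw, hw⟩ := h (wordProd A p v) (by simpa using hv) (max (max k m) (n₀ + 1))
  simp only [max_le_iff] at hkw
  obtain ⟨⟨hkw, hmw⟩, hn₀w⟩ := hkw
  refine ⟨w, hkw, ?_⟩
  have hw0 : (0 : ℝ) < w.length := by exact_mod_cast (by lia : 0 < w.length)
  have hM := maxNorm_pos A w.length
  have hlogM := hn₀ w.length (by lia)
  rw [div_lt_iff₀ hw0] at hlogM
  have hmain : Real.log ‖wordProd A p v‖ - (s - c / 2) * p.length < w.length * (c / 4) :=
    (div_lt_iff₀ (by positivity)).1 (hm.trans_le (by exact_mod_cast hmw))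
  have hlog := Real.log_le_log (norm_pos_iff.2 (by simpa using hv)) hw
  rw [Real.log_mul (by positivity) hpv.ne', Real.log_mul (Real.exp_ne_zero _) hM.ne',
    Real.log_exp] at hlog
  rw [wordProd_append_apply, List.length_append, Nat.cast_add]
  linarith

end InverseProjectivelyMinimal

theorem lyapunov_irregular_directions_general {ι E : Type*} [Finite ι] [TopologicalSpace ι]
    [DiscreteTopology ι] [NormedAddCommGroup E] [NormedSpace ℝ E] [FiniteDimensional ℝ E]
    {A : ι → E ≃L[ℝ] E} (hA : InverseProjectivelyMinimal A)
    (hunb : ¬ BddAbove (Set.range fun w => conditionNumber (wordProd A w))) {v : E} (hv : v ≠ 0) :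
    ∀ᶠ ω in residual (ℤ → ι),
      liminf (fun n : ℕ => (n : ℝ)⁻¹ * Real.log ‖wordProd A (firstLetters ω n) v‖) atTop <
        limsup (fun n : ℕ => (n : ℝ)⁻¹ * Real.log ‖wordProd A (firstLetters ω n) v‖) atTop := by
  have : Nontrivial E := ⟨v, 0, hv⟩
  rcases isEmpty_or_nonempty ι with hι | hι
  · exact Eventually.of_forall fun ω => isEmptyElim (ω 0)
  obtain ⟨b, hb, hslow⟩ := hA.exists_lt_lim_and_log_norm_wordProd_append_lt hunb
  obtain ⟨a, hba, ha⟩ := exists_between hb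
  obtain ⟨C, hC⟩ := exists_abs_log_norm_wordProd_le (A := A) hv
  filter_upwards [eventually_residual_frequently_firstLetters
      (Q := fun w => Real.log ‖wordProd A w v‖ < b * w.length) (hslow v hv),
    eventually_residual_frequently_firstLetters
      (Q := fun w => a * w.length < Real.log ‖wordProd A w v‖)
      (hA.exists_lt_log_norm_wordProd_append ha hv)] with ω hω_slow hω_fast
  simp only [length_firstLetters] at hω_slow hω_fast
  refine liminf_lt_limsup_of_frequently hba
    (fun n => by simpa only [length_firstLetters] using hC (firstLetters ω n))
    ((hω_slow.and_eventually (eventually_gt_atTop 0)).mono fun n ⟨hn, hn0⟩ => ?_)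
    ((hω_fast.and_eventually (eventually_gt_atTop 0)).mono fun n ⟨hn, hn0⟩ => ?_)
  · rw [inv_mul_le_iff₀ (by exact_mod_cast hn0), mul_comm]
    exact hn.le
  · rw [le_inv_mul_iff₀ (by exact_mod_cast hn0), mul_comm]
    exact hn.le

lemma one_le_norm_of_abs_det_eq_one {E : Type*} [NormedAddCommGroup E] [NormedSpace ℝ E]
    [FiniteDimensional ℝ E] [Nontrivial E] {f : E →L[ℝ] E} (hf : |f.det| = 1) : 1 ≤ ‖f‖ := by
  by_contra! hlt
  have hdet_pow (n : ℕ) : |(f ^ n).det| = 1 := by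
    rw [ContinuousLinearMap.det, ContinuousLinearMap.toLinearMap_pow, map_pow, abs_pow, hf, one_pow]
  have hzero : |(0 : E →L[ℝ] E).det| = 0 :=
    abs_eq_zero.2 (LinearMap.det_zero.trans (zero_pow Module.finrank_pos.ne'))
  have hlim := (ContinuousLinearMap.continuous_det.abs.tendsto (0 : E →L[ℝ] E)).comp
    (tendsto_pow_atTop_nhds_zero_of_norm_lt_one hlt)
  simp only [Function.comp_def, hdet_pow, hzero] at hlim
  exact one_ne_zero (tendsto_nhds_unique tendsto_const_nhds hlim)

section SpecialLinear

open Matrix (SpecialLinearGroup toEuclideanCLM)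

variable {d κ : ℕ}

/-- The representation of `SL(d, ℝ)` on Euclidean space by continuous linear automorphisms. -/
def euclideanRep (d : ℕ) : SpecialLinearGroup (Fin d) ℝ →*
    (EuclideanSpace ℝ (Fin d) ≃L[ℝ] EuclideanSpace ℝ (Fin d)) :=
  (ContinuousLinearEquiv.unitsEquiv ℝ (EuclideanSpace ℝ (Fin d))).toMonoidHom.comp
    ((Units.map (toEuclideanCLM (𝕜 := ℝ) (n := Fin d)).toMonoidHom).comp
      SpecialLinearGroup.toGL)

lemma euclideanRep_apply (g : SpecialLinearGroup (Fin d) ℝ) (v : EuclideanSpace ℝ (Fin d)) :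
    euclideanRep d g v = mvec (g : Matrix (Fin d) (Fin d) ℝ) v := rfl

lemma toContinuousLinearMap_euclideanRep (g : SpecialLinearGroup (Fin d) ℝ) :
    (euclideanRep d g).toContinuousLinearMap =
      toEuclideanCLM (𝕜 := ℝ) (g : Matrix (Fin d) (Fin d) ℝ) := rfl

lemma det_toContinuousLinearMap_euclideanRep (g : SpecialLinearGroup (Fin d) ℝ) :
    (euclideanRep d g).toContinuousLinearMap.det = 1 := by
  rw [toContinuousLinearMap_euclideanRep, ContinuousLinearMap.det,
    Matrix.coe_toEuclideanCLM_eq_toEuclideanLin, Matrix.toEuclideanLin_eq_toLin_orthonormal,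
    LinearMap.det_toLin]
  exact g.2

lemma isClosedEmbedding_toContinuousLinearMap_euclideanRep :
    IsClosedEmbedding fun g : SpecialLinearGroup (Fin d) ℝ =>
      (euclideanRep d g).toContinuousLinearMap :=
  ((toEuclideanCLM (𝕜 := ℝ) (n := Fin d)).toAlgEquiv.toLinearEquiv.toContinuousLinearEquiv
    |>.toHomeomorph.isClosedEmbedding).comp SpecialLinearGroup.isClosedEmbedding_val

lemma cocycleProd_eq_wordProd (A : Fin κ → SpecialLinearGroup (Fin d) ℝ) (ω : ℤ → Fin κ) (n : ℕ) :
    cocycleProd A ω n = wordProd A (firstLetters ω n) := by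
  induction n with
  | zero => rfl
  | succ n ih =>
    rw [firstLetters_succ, wordProd_append, wordProd_singleton, ← ih]
    rfl

lemma mvec_cocycleProd (A : Fin κ → SpecialLinearGroup (Fin d) ℝ) (ω : ℤ → Fin κ) (n : ℕ)
    (v : EuclideanSpace ℝ (Fin d)) :
    mvec (cocycleProd A ω n : Matrix (Fin d) (Fin d) ℝ) v =
      wordProd (fun i => euclideanRep d (A i)) (firstLetters ω n) v := by
  rw [cocycleProd_eq_wordProd, ← map_wordProd, euclideanRep_apply]

lemma not_bddAbove_conditionNumber [NeZero d] {A : Fin κ → SpecialLinearGroup (Fin d) ℝ}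
    (hnc : ¬ IsCompact (closure
      (((↑) : SpecialLinearGroup (Fin d) ℝ → Matrix (Fin d) (Fin d) ℝ) ''
        (Subgroup.closure (Set.range A) : Set (SpecialLinearGroup (Fin d) ℝ))))) :
    ¬ BddAbove
      (Set.range fun w => conditionNumber (wordProd (fun i => euclideanRep d (A i)) w)) := by
  rintro ⟨C, hC⟩
  have hnorm : ∀ g ∈ Submonoid.closure (Set.range A),
      ‖(euclideanRep d g).toContinuousLinearMap‖ ≤ C := by
    intro g hg
    obtain ⟨w, rfl⟩ := exists_wordProd_eq_of_mem_closure hg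
    have hinv : 1 ≤ ‖(euclideanRep d (wordProd A w)).symm.toContinuousLinearMap‖ :=
      one_le_norm_of_abs_det_eq_one (by
        rw [ContinuousLinearEquiv.det_coe_symm, det_toContinuousLinearMap_euclideanRep, inv_one,
          abs_one])
    have hcond : conditionNumber (euclideanRep d (wordProd A w)) ≤ C :=
      map_wordProd (euclideanRep d) A w ▸ hC ⟨w, rfl⟩
    exact (le_mul_of_one_le_right (norm_nonneg _) hinv).trans hcond
  have hcompact : IsCompact (closure (Submonoid.closure (Set.range A) :
      Set (SpecialLinearGroup (Fin d) ℝ))) :=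
    ((isClosedEmbedding_toContinuousLinearMap_euclideanRep.isCompact_preimage
      (isCompact_closedBall 0 C))).closure_of_subset fun g hg =>
        mem_closedBall_zero_iff.2 (hnorm g hg)
  exact hnc ((hcompact.image SpecialLinearGroup.isClosedEmbedding_val.continuous).closure_of_subset
    (Set.image_mono (subgroupClosure_subset_closure_submonoidClosure hcompact)))

lemma projWordComp_eq (A : Fin κ → SpecialLinearGroup (Fin d) ℝ) (w : List (Fin κ))
    {v : EuclideanSpace ℝ (Fin d)} (hv : ‖v‖ = 1) :
    projWordComp A w v = ‖wordProd (fun i => euclideanRep d (A i)) w v‖⁻¹ •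
      wordProd (fun i => euclideanRep d (A i)) w v := by
  induction w generalizing v with
  | nil => simp [projWordComp, wordProd_nil_apply, hv]
  | cons i w ih =>
    set x := euclideanRep d (A i) v with hx
    have hx0 : x ≠ 0 := by
      rw [hx, map_ne_zero_iff _ (euclideanRep d (A i)).injective]
      exact norm_ne_zero_iff.1 (by simp [hv])
    calc projWordComp A (i :: w) v = projWordComp A w (‖x‖⁻¹ • x) := rfl
      _ = ‖wordProd (fun i => euclideanRep d (A i)) w x‖⁻¹ •
            wordProd (fun i => euclideanRep d (A i)) w x := by
          have hunit : ‖‖x‖⁻¹ • x‖ = 1 := norm_smul_inv_norm hx0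
          rw [ih hunit, map_smul, norm_smul, smul_smul, norm_inv, norm_norm,
            mul_inv, inv_inv, mul_right_comm, mul_inv_cancel₀ (norm_ne_zero_iff.2 hx0), one_mul]
      _ = _ := by rw [wordProd_cons]; rfl

namespace StronglyProjectivelyAccessible

variable {A : Fin κ → SpecialLinearGroup (Fin d) ℝ}

lemma exists_projWordComp_mem_ball (hacc : StronglyProjectivelyAccessible A) {ε : ℝ} (hε : 0 < ε) :
    ∃ K, ∀ x ∈ unitSphere d, ∀ y ∈ unitSphere d, ∀ δ, 0 < δ → δ ≤ ε →
      ∃ w : List (Fin κ), w.length ≤ K ∧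
        ∃ z ∈ unitSphere d, z ∈ ball x ε ∧ projWordComp A w z ∈ ball y δ := by
  obtain ⟨K, hK⟩ := hacc ε hε
  refine ⟨K, fun x hx y hy δ hδ hδε => ?_⟩
  obtain ⟨_, hwK, w, rfl, u, hu, hsub⟩ := hK x hx y hy δ hδ hδε
  obtain ⟨⟨z, ⟨hzx, hz⟩, rfl⟩, hzy⟩ := hsub ⟨mem_ball_self (by positivity), hu⟩
  exact ⟨w, hwK, z, hz, hzx, hzy⟩

/-- The target radius is taken small enough to survive pulling back by the inverse of any word of
the bounded length that accessibility provides. -/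
lemma inverseProjectivelyMinimal (hacc : StronglyProjectivelyAccessible A) :
    InverseProjectivelyMinimal fun i => euclideanRep d (A i) := by
  refine inverseProjectivelyMinimal_of_forall_norm_eq_one fun x y hx hy ε hε => ?_
  obtain ⟨L, hL, hLw⟩ := exists_norm_wordProd_le_pow fun i => euclideanRep d (A i)
  obtain ⟨K, hK⟩ := hacc.exists_projWordComp_mem_ball (half_pos hε)
  have hLK : 1 ≤ L ^ K := one_le_pow₀ hL
  obtain ⟨w, hwK, z, hz, hzx, hzy⟩ := hK x (mem_sphere_zero_iff_norm.2 hx) y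
    (mem_sphere_zero_iff_norm.2 hy) (ε / 2 / (L ^ K * L ^ K)) (by positivity)
    (div_le_self (by positivity) (one_le_mul_of_one_le_of_one_le hLK hLK))
  set f := wordProd (fun i => euclideanRep d (A i)) w
  rw [mem_ball_iff_norm'] at hzx
  rw [mem_ball_iff_norm, projWordComp_eq A w (mem_sphere_zero_iff_norm.1 hz)] at hzy
  have hz0 : ‖f z‖ ≠ 0 := norm_ne_zero_iff.2
    ((map_ne_zero_iff f f.injective).2 (ne_zero_of_mem_unit_sphere ⟨z, hz⟩))
  have hpull : ‖z - ‖f z‖ • f.symm y‖ < ε / 2 := by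
    have hz_sub : z - ‖f z‖ • f.symm y = ‖f z‖ • f.symm (‖f z‖⁻¹ • f z - y) := by
      rw [map_sub, map_smul, f.symm_apply_apply, smul_sub, smul_inv_smul₀ hz0]
    have hf : ‖f.toContinuousLinearMap‖ ≤ L ^ K := (hLw w).1.trans (pow_le_pow_right₀ hL hwK)
    have hfz : ‖f z‖ ≤ L ^ K :=
      (f.toContinuousLinearMap.le_of_opNorm_le hf z).trans_eq
        (by rw [mem_sphere_zero_iff_norm.1 hz, mul_one])
    have hfsymm : ‖f.symm.toContinuousLinearMap‖ ≤ L ^ K :=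
      (hLw w).2.trans (pow_le_pow_right₀ hL hwK)
    calc ‖z - ‖f z‖ • f.symm y‖ = ‖f z‖ * ‖f.symm (‖f z‖⁻¹ • f z - y)‖ := by
          rw [hz_sub, norm_smul, norm_norm]
      _ ≤ L ^ K * (L ^ K * ‖‖f z‖⁻¹ • f z - y‖) :=
          mul_le_mul hfz (f.symm.toContinuousLinearMap.le_of_opNorm_le hfsymm _) (norm_nonneg _)
            (by positivity)
      _ < ε / 2 := by rwa [← mul_assoc, ← lt_div_iff₀' (by positivity)]
  refine ⟨‖f z‖, w, ?_⟩
  calc ‖x - ‖f z‖ • f.symm y‖ ≤ ‖x - z‖ + ‖z - ‖f z‖ • f.symm y‖ :=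
        norm_sub_le_norm_sub_add_norm_sub ..
    _ < ε := by linarith

end StronglyProjectivelyAccessible

end SpecialLinear

/-- **Lyapunov non-typical behaviour along every direction.**
If the subgroup of `SL(d,ℝ)` generated by `A₁, …, A_κ` has non-compact closure and the
family is strongly projectively accessible, then for every nonzero vector `v ∈ ℝ^d` there
is a residual subset `𝓡_v` of the shift space `Σ_κ = {1,…,κ}^ℤ` along which the
exponential growth rate of `‖A⁽ⁿ⁾(ω) v‖` does not exist: the liminf of
`(1/n) log ‖A⁽ⁿ⁾(ω) v‖` is strictly smaller than its limsup. -/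
theorem lyapunov_irregular_directions (d κ : ℕ) (hd : 2 ≤ d) (hκ : 1 ≤ κ)
    (A : Fin κ → Matrix.SpecialLinearGroup (Fin d) ℝ)
    (hnc : ¬ IsCompact (closure
      (((↑) : Matrix.SpecialLinearGroup (Fin d) ℝ → Matrix (Fin d) (Fin d) ℝ) ''
        ((Subgroup.closure (Set.range A) : Subgroup (Matrix.SpecialLinearGroup (Fin d) ℝ)) :
          Set (Matrix.SpecialLinearGroup (Fin d) ℝ)))))
    (hacc : StronglyProjectivelyAccessible A) :
    ∀ v : EuclideanSpace ℝ (Fin d), v ≠ 0 →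
      ∃ R : Set (ℤ → Fin κ), R ∈ residual (ℤ → Fin κ) ∧
        ∀ ω ∈ R,
          liminf (fun n : ℕ =>
              (n : ℝ)⁻¹ * Real.log ‖mvec (cocycleProd A ω n : Matrix (Fin d) (Fin d) ℝ) v‖)
            atTop <
          limsup (fun n : ℕ =>
              (n : ℝ)⁻¹ * Real.log ‖mvec (cocycleProd A ω n : Matrix (Fin d) (Fin d) ℝ) v‖)
            atTop := by
  intro v hv
  have : NeZero d := ⟨by lia⟩
  simp only [mvec_cocycleProd]
  exact eventually_iff_exists_mem.1 (lyapunov_irregular_directions_general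
    hacc.inverseProjectivelyMinimal (not_bddAbove_conditionNumber hnc) hv)

end
end

section
/- Let (X,d) be a compact metric space, κ ≥ 1, and let f₁,…,f_κ : X → X be bijections such that every f_i and every f_i⁻¹ is Lipschitz continuous. Let ψ : X → ℝ be continuous. Assume: (a) the semigroup action generated by f₁,…,f_κ has frequent hitting times; (b) there exists 1 ≤ i ≤ κ such that ψ is not a coboundary with respect to f_i. Then the set 𝓡_Σ of all ω ∈ Σ_κ such that {x ∈ X : the sequence ((1/n) ∑_{j=0}^{n−1} ψ(f_ω^j(x)))_{n≥1} does not converge} is a residual subset of X, is itself a residual subset of Σ_κ. In particular, the set I_S(ψ) = {x ∈ X : there exists ω ∈ Σ_κ such that the sequence ((1/n) ∑_{j=0}^{n−1} ψ(f_ω^j(x)))_{n≥1} does not converge} is a residual subset of X. -/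
open Filter Topology Metric MeasureTheory

noncomputable section

/-- Composition `f_{ω_{p-1}} ∘ ⋯ ∘ f_{ω₀}` along a finite word `w = (ω₀, …, ω_{p-1})`. -/
def wordComp {X : Type*} {κ : ℕ} (f : Fin κ → X → X) (w : List (Fin κ)) (x : X) : X :=
  w.foldl (fun y i => f i y) x

/-- Composition `f_ω^n = f_{ω_{n-1}} ∘ ⋯ ∘ f_{ω₀}` along an infinite word `ω ∈ {1,…,κ}^ℕ`. -/
def seqComp {X : Type*} {κ : ℕ} (f : Fin κ → X → X) (ω : ℕ → Fin κ) : ℕ → X → X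
  | 0 => id
  | n + 1 => f (ω n) ∘ seqComp f ω n

/-- The semigroup action generated by `f₁, …, f_κ` has *frequent hitting times*:
for every `ε > 0` there is `K(ε)` such that for all `x₁, x₂ ∈ X` and every radius
`0 < r ≤ ε/2` there are `p ≤ K(ε)`, a word `w` of length `p` and a point `z` with
`B(z, r/2) ⊆ f_w^p(B(x₁,ε)) ∩ B(x₂,r)`. -/
def FrequentHittingTimes {X : Type*} [MetricSpace X] {κ : ℕ} (f : Fin κ → X → X) : Prop :=
  ∀ ε : ℝ, 0 < ε → ∃ K : ℕ, ∀ x₁ x₂ : X, ∀ r : ℝ, 0 < r → r ≤ ε / 2 →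
    ∃ p ≤ K, ∃ w : List (Fin κ), w.length = p ∧ ∃ z : X,
      Metric.ball z (r / 2) ⊆ wordComp f w '' Metric.ball x₁ ε ∩ Metric.ball x₂ r

/-- `ψ` is not a coboundary with respect to `f`: there are two `f`-invariant Borel
probability measures giving `ψ` different space averages. -/
def NotCoboundary {X : Type*} [MeasurableSpace X] (f : X → X) (ψ : X → ℝ) : Prop :=
  ∃ μ₁ μ₂ : Measure X, IsProbabilityMeasure μ₁ ∧ IsProbabilityMeasure μ₂ ∧
    μ₁.map f = μ₁ ∧ μ₂.map f = μ₂ ∧ ∫ x, ψ x ∂μ₁ < ∫ x, ψ x ∂μ₂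

/-!
Call a pair `(ω, x)` irregular if the averages of `ψ` along the orbit of `x` under `ω` diverge.
Given numbers `a < b` strictly between the two space averages, it suffices that a generic pair has
averages below `a` at arbitrarily large times and averages above `b` at arbitrarily large times:
generic pairs are then irregular, and the Kuratowski–Ulam theorem (`eventually_residual_curry`)
passes to generic `ω`.

Having an average below `a` after time `N` is an open condition on `(ω, x)`. For its density, start
from a cylinder, fixed by a finite word `u`, and an open set `V`. Hitting in bounded time gives `K`
such that words of length at most `K` steer some point of `f_u(V)` arbitrarily near a point whose
`n`-th Birkhoff sum under a single generator is small. Since `K` is available before `n` is chosen,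
the part of the orbit preceding those `n` steps does not affect the average in the limit.
-/

section KuratowskiUlam

variable {Y X : Type*} [TopologicalSpace Y] [TopologicalSpace X] [SecondCountableTopology X]

theorem eventually_residual_dense_section {U : Set (Y × X)} (hU : IsOpen U) (hd : Dense U) :
    ∀ᶠ y in residual Y, Dense {x | (y, x) ∈ U} := by
  have hB := TopologicalSpace.isBasis_countableBasis X
  have hproj : ∀ V ∈ TopologicalSpace.countableBasis X,
      ∀ᶠ y in residual Y, y ∈ Prod.fst '' (U ∩ Prod.snd ⁻¹' V) := by
    intro V hV
    refine residual_of_dense_open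
      (isOpenMap_fst _ (hU.inter ((hB.isOpen hV).preimage continuous_snd))) ?_
    rw [dense_iff_inter_open]
    rintro O hO ⟨y, hy⟩
    obtain ⟨x, hx⟩ := TopologicalSpace.nonempty_of_mem_countableBasis hV
    obtain ⟨q, hqO, hqU⟩ := hd.inter_open_nonempty (O ×ˢ V) (hO.prod (hB.isOpen hV))
      ⟨(y, x), hy, hx⟩
    exact ⟨q.1, hqO.1, q, ⟨hqU, hqO.2⟩, rfl⟩
  filter_upwards [(eventually_countable_ball
    (TopologicalSpace.countable_countableBasis X)).2 hproj] with y hy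
  rw [hB.dense_iff]
  rintro V hV -
  obtain ⟨⟨_, x⟩, ⟨hqU, hqV⟩, rfl⟩ := hy V hV
  exact ⟨x, hqV, hqU⟩

theorem eventually_residual_curry {p : Y × X → Prop} (hp : ∀ᶠ q in residual (Y × X), p q) :
    ∀ᶠ y in residual Y, ∀ᶠ x in residual X, p (y, x) := by
  obtain ⟨S, hSopen, hSdense, hScount, hSp⟩ := mem_residual_iff.1 hp
  filter_upwards [(eventually_countable_ball hScount).2 fun U hU =>
    eventually_residual_dense_section (hSopen U hU) (hSdense U hU)] with y hy
  filter_upwards [(eventually_countable_ball hScount).2 fun U hU =>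
    residual_of_dense_open ((hSopen U hU).preimage (Continuous.prodMk_right y)) (hy U hU)]
    with x hx
  exact hSp (Set.mem_sInter.2 hx)

end KuratowskiUlam

theorem exists_birkhoffSum_le_mul_integral {X : Type*} [MeasurableSpace X] {μ : Measure X}
    [IsProbabilityMeasure μ] {g : X → X} (hg : MeasurePreserving g μ μ) {ψ : X → ℝ}
    (hψ : Integrable ψ μ) (n : ℕ) : ∃ x, birkhoffSum g ψ n x ≤ n * ∫ y, ψ y ∂μ := by
  have hint (j : ℕ) : Integrable (fun x => ψ (g^[j] x)) μ :=
    (hg.iterate j).integrable_comp_of_integrable hψ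
  have hinv (j : ℕ) : ∫ x, ψ (g^[j] x) ∂μ = ∫ y, ψ y ∂μ := by
    have hj := hg.iterate j
    rw [← integral_map hj.aemeasurable (hj.map_eq.symm ▸ hψ.aestronglyMeasurable), hj.map_eq]
  obtain ⟨x, hx⟩ := exists_le_integral (integrable_finsetSum (Finset.range n) fun j _ => hint j)
  refine ⟨x, hx.trans_eq ?_⟩
  simp [integral_finsetSum _ fun j _ => hint j, hinv]

section Words

variable {X : Type*} {κ : ℕ}

theorem wordComp_append (f : Fin κ → X → X) (u w : List (Fin κ)) (x : X) :
    wordComp f (u ++ w) x = wordComp f w (wordComp f u x) :=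
  List.foldl_append

theorem isOpenMap_wordComp [TopologicalSpace X] {f : Fin κ → X → X} (hf : ∀ i, IsOpenMap (f i))
    (w : List (Fin κ)) : IsOpenMap (wordComp f w) := by
  induction w with
  | nil => exact IsOpenMap.id
  | cons i w ih => exact ih.comp (hf i)

theorem seqComp_eq_wordComp (f : Fin κ → X → X) (ω : ℕ → Fin κ) (n : ℕ) (x : X) :
    seqComp f ω n x = wordComp f ((List.range n).map ω) x := by
  induction n with
  | zero => rfl
  | succ n ih =>
    rw [List.range_succ, List.map_append, wordComp_append, ← ih]
    rfl

theorem continuous_seqComp [TopologicalSpace X] {f : Fin κ → X → X} (hf : ∀ i, Continuous (f i))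
    (n : ℕ) : Continuous fun q : (ℕ → Fin κ) × X => seqComp f q.1 n q.2 := by
  induction n with
  | zero => exact continuous_snd
  | succ n ih =>
    have heval : Continuous fun q : Fin κ × X => f q.1 q.2 := continuous_prod_of_discrete_left.2 hf
    exact heval.comp (((continuous_apply n).comp continuous_fst).prodMk ih)

/-- The infinite word `w i i i ⋯` which continues the finite word `w` by the constant letter `i`,
so that its orbits eventually follow the single generator `f i`. -/
def padWord (w : List (Fin κ)) (i : Fin κ) (k : ℕ) : Fin κ :=
  w.getD k i

theorem padWord_range_map_append_mem_cylinder (ω : ℕ → Fin κ) (m : ℕ) (w : List (Fin κ))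
    (i : Fin κ) : padWord ((List.range m).map ω ++ w) i ∈ PiNat.cylinder ω m := by
  intro k hk
  rw [padWord, List.getD_append _ _ _ _ (by simpa using hk)]
  simp [hk]

theorem seqComp_padWord_length_add (f : Fin κ → X → X) (w : List (Fin κ)) (i : Fin κ) (n : ℕ)
    (x : X) : seqComp f (padWord w i) (w.length + n) x = (f i)^[n] (wordComp f w x) := by
  induction n with
  | zero =>
    have hw : (List.range w.length).map (padWord w i) = w :=
      List.ext_getElem (by simp) fun k _ hk => by simp [padWord, hk]
    rw [Nat.add_zero, seqComp_eq_wordComp, hw, Function.iterate_zero_apply]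
  | succ n ih =>
    rw [Function.iterate_succ_apply', ← ih, ← Nat.add_assoc]
    simp [seqComp, padWord]

end Words

section BirkhoffAverages

variable {X : Type*} {κ : ℕ}

/-- The Birkhoff average of `ψ` over the first `n` points of the orbit of `x` along the infinite
word `ω`, the analogue of `birkhoffAverage` for a sequence of maps. It is `0` for `n = 0`. -/
def birkhoffAverageAlong (f : Fin κ → X → X) (ψ : X → ℝ) (ω : ℕ → Fin κ) (n : ℕ) (x : X) : ℝ :=
  (n : ℝ)⁻¹ * ∑ j ∈ Finset.range n, ψ (seqComp f ω j x)

/-- The set of Birkhoff irregular points of `ψ` along the infinite word `ω`: those whose Birkhoff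
averages do not converge. -/
def irregularSet (f : Fin κ → X → X) (ψ : X → ℝ) (ω : ℕ → Fin κ) : Set X :=
  {x | ¬ ∃ l : ℝ, Tendsto (fun n => birkhoffAverageAlong f ψ ω n x) atTop (𝓝 l)}

theorem birkhoffAverageAlong_neg (f : Fin κ → X → X) (ψ : X → ℝ) (ω : ℕ → Fin κ) (n : ℕ) (x : X) :
    birkhoffAverageAlong f (-ψ) ω n x = -birkhoffAverageAlong f ψ ω n x := by
  simp [birkhoffAverageAlong]

theorem continuous_birkhoffAverageAlong [TopologicalSpace X] {f : Fin κ → X → X}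
    (hf : ∀ i, Continuous (f i)) {ψ : X → ℝ} (hψ : Continuous ψ) (n : ℕ) :
    Continuous fun q : (ℕ → Fin κ) × X => birkhoffAverageAlong f ψ q.1 n q.2 :=
  continuous_const.mul (continuous_finsetSum _ fun j _ => hψ.comp (continuous_seqComp hf j))

theorem isOpen_exists_birkhoffAverageAlong_lt [TopologicalSpace X] {f : Fin κ → X → X}
    (hf : ∀ i, Continuous (f i)) {ψ : X → ℝ} (hψ : Continuous ψ) (c : ℝ) (N : ℕ) :
    IsOpen {q : (ℕ → Fin κ) × X | ∃ n ≥ N, birkhoffAverageAlong f ψ q.1 n q.2 < c} := by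
  have hunion : {q : (ℕ → Fin κ) × X | ∃ n ≥ N, birkhoffAverageAlong f ψ q.1 n q.2 < c} =
      ⋃ n ≥ N, {q | birkhoffAverageAlong f ψ q.1 n q.2 < c} := by
    ext q
    simp
  rw [hunion]
  exact isOpen_biUnion fun n _ =>
    isOpen_lt (continuous_birkhoffAverageAlong hf hψ n) continuous_const

theorem mem_irregularSet_of_frequently {f : Fin κ → X → X} {ψ : X → ℝ} {ω : ℕ → Fin κ} {x : X}
    {a b : ℝ} (hab : a < b) (ha : ∃ᶠ n in atTop, birkhoffAverageAlong f ψ ω n x < a)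
    (hb : ∃ᶠ n in atTop, b < birkhoffAverageAlong f ψ ω n x) : x ∈ irregularSet f ψ ω := by
  rintro ⟨l, hl⟩
  have hla : l ≤ a := le_of_tendsto_of_frequently hl (ha.mono fun _ h => h.le)
  have hbl : b ≤ l := ge_of_tendsto_of_frequently hl (hb.mono fun _ h => h.le)
  exact (hla.trans_lt hab).not_ge hbl

theorem sum_seqComp_padWord (f : Fin κ → X → X) (ψ : X → ℝ) (w : List (Fin κ)) (i : Fin κ) (n : ℕ)
    (x : X) : ∑ j ∈ Finset.range (w.length + n), ψ (seqComp f (padWord w i) j x) =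
      ∑ j ∈ Finset.range w.length, ψ (seqComp f (padWord w i) j x) +
        birkhoffSum (f i) ψ n (wordComp f w x) := by
  simp only [Finset.sum_range_add, seqComp_padWord_length_add, birkhoffSum]

theorem birkhoffAverageAlong_padWord_lt {f : Fin κ → X → X} {ψ : X → ℝ} {C : ℝ}
    (hC : ∀ x, ψ x ≤ C) {w : List (Fin κ)} {i : Fin κ} {n : ℕ} {x : X} {a c : ℝ}
    (hsum : birkhoffSum (f i) ψ n (wordComp f w x) < n * a)
    (hlen : w.length * (C - c) ≤ n * (c - a)) :
    birkhoffAverageAlong f ψ (padWord w i) (w.length + n) x < c := by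
  have hn : 0 < n := Nat.pos_of_ne_zero fun h => by simp [h] at hsum
  have hinit : ∑ j ∈ Finset.range w.length, ψ (seqComp f (padWord w i) j x) ≤ w.length * C :=
    (Finset.sum_le_card_nsmul _ _ C fun j _ => hC _).trans_eq (by simp)
  rw [birkhoffAverageAlong, inv_mul_lt_iff₀ (by positivity), sum_seqComp_padWord]
  push_cast
  linarith

end BirkhoffAverages

/-- Hitting in bounded time, the topological content of frequent hitting times: the images of any
nonempty open set under the words of length at most some `K` are jointly dense. Here `K` depends on
the open set, but not on the targets to be hit. -/
def HitsInBoundedTime {X : Type*} [TopologicalSpace X] {κ : ℕ} (f : Fin κ → X → X) : Prop :=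
  ∀ V : Set X, IsOpen V → V.Nonempty →
    ∃ K : ℕ, Dense {y | ∃ w : List (Fin κ), w.length ≤ K ∧ y ∈ wordComp f w '' V}

theorem FrequentHittingTimes.hitsInBoundedTime {X : Type*} [MetricSpace X] {κ : ℕ}
    {f : Fin κ → X → X} (hf : FrequentHittingTimes f) : HitsInBoundedTime f := by
  rintro V hV ⟨x₁, hx₁⟩
  obtain ⟨ε, hε, hεV⟩ := Metric.isOpen_iff.1 hV x₁ hx₁
  obtain ⟨K, hK⟩ := hf ε hε
  refine ⟨K, Metric.dense_iff.2 fun x₂ r hr => ?_⟩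
  have hr' : 0 < min r (ε / 2) := lt_min hr (half_pos hε)
  obtain ⟨p, hp, w, rfl, z, hz⟩ := hK x₁ x₂ _ hr' (min_le_right _ _)
  obtain ⟨hz₁, hz₂⟩ := hz (mem_ball_self (half_pos hr'))
  exact ⟨z, ball_subset_ball (min_le_left _ _) hz₂, w, hp, Set.image_mono hεV hz₁⟩

section Genericity

variable {X : Type*} [TopologicalSpace X] {κ : ℕ} {f : Fin κ → X → X} {ψ : X → ℝ}

namespace HitsInBoundedTime

theorem exists_birkhoffSum_wordComp_lt (hhit : HitsInBoundedTime f) {g : X → X} (hg : Continuous g)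
    (hψ : Continuous ψ) {V : Set X} (hV : IsOpen V) (hVne : V.Nonempty) :
    ∃ K : ℕ, ∀ (n : ℕ) (s : ℝ), (∃ z, birkhoffSum g ψ n z < s) →
      ∃ w : List (Fin κ), w.length ≤ K ∧ ∃ y ∈ V, birkhoffSum g ψ n (wordComp f w y) < s := by
  obtain ⟨K, hK⟩ := hhit V hV hVne
  refine ⟨K, fun n s hs => ?_⟩
  have hopen : IsOpen {z | birkhoffSum g ψ n z < s} :=
    isOpen_lt (continuous_finsetSum _ fun j _ => hψ.comp (hg.iterate j)) continuous_const
  obtain ⟨_, hsum, w, hw, y, hy, rfl⟩ := hK.inter_open_nonempty _ hopen hs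
  exact ⟨w, hw, y, hy, hsum⟩

variable [MeasurableSpace X] {i : Fin κ} {μ : Measure X} [IsProbabilityMeasure μ] {c : ℝ}

theorem exists_birkhoffAverageAlong_padWord_append_lt (hhit : HitsInBoundedTime f)
    (hf : Continuous (f i)) (hfo : ∀ j, IsOpenMap (f j)) (hψ : Continuous ψ)
    (hψb : BddAbove (Set.range ψ)) (hψi : Integrable ψ μ) (hμ : MeasurePreserving (f i) μ μ)
    (hc : ∫ x, ψ x ∂μ < c) (u : List (Fin κ)) {V : Set X} (hV : IsOpen V) (hVne : V.Nonempty)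
    (N : ℕ) :
    ∃ w, ∃ y ∈ V, ∃ n ≥ N, birkhoffAverageAlong f ψ (padWord (u ++ w) i) n y < c := by
  obtain ⟨K, hK⟩ := hhit.exists_birkhoffSum_wordComp_lt hf hψ
    (isOpenMap_wordComp hfo u V hV) (hVne.image _)
  obtain ⟨C, hC⟩ := hψb
  obtain ⟨a, ha, hac⟩ := exists_between hc
  obtain ⟨n, hnN, hn⟩ : ∃ n > N, ((u.length + K : ℕ) : ℝ) * |C - c| ≤ n * (c - a) :=
    ((eventually_gt_atTop N).and ((tendsto_natCast_atTop_atTop.atTop_mul_const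
      (sub_pos.2 hac)).eventually_ge_atTop _)).exists
  obtain ⟨z, hz⟩ := exists_birkhoffSum_le_mul_integral hμ hψi n
  have hn₀ : (0 : ℝ) < n := by exact_mod_cast N.zero_le.trans_lt hnN
  obtain ⟨w, hw, _, ⟨y, hyV, rfl⟩, hsum⟩ :=
    hK n (n * a) ⟨z, hz.trans_lt (mul_lt_mul_of_pos_left ha hn₀)⟩
  rw [← wordComp_append] at hsum
  have hlen : (u ++ w).length ≤ u.length + K := by simpa using hw
  have hinit : ((u ++ w).length : ℝ) * (C - c) ≤ n * (c - a) :=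
    calc ((u ++ w).length : ℝ) * (C - c)
        ≤ (u ++ w).length * |C - c| := by gcongr; exact le_abs_self _
      _ ≤ (u.length + K : ℕ) * |C - c| := by gcongr
      _ ≤ n * (c - a) := hn
  exact ⟨w, y, hyV, (u ++ w).length + n, hnN.le.trans (Nat.le_add_left _ _),
    birkhoffAverageAlong_padWord_lt (fun x => hC ⟨x, rfl⟩) hsum hinit⟩

theorem dense_exists_birkhoffAverageAlong_lt (hhit : HitsInBoundedTime f)
    (hf : Continuous (f i)) (hfo : ∀ j, IsOpenMap (f j)) (hψ : Continuous ψ)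
    (hψb : BddAbove (Set.range ψ)) (hψi : Integrable ψ μ) (hμ : MeasurePreserving (f i) μ μ)
    (hc : ∫ x, ψ x ∂μ < c) (N : ℕ) :
    Dense {q : (ℕ → Fin κ) × X | ∃ n ≥ N, birkhoffAverageAlong f ψ q.1 n q.2 < c} := by
  rw [dense_iff_inter_open]
  rintro O hO ⟨⟨ω, x⟩, hωx⟩
  obtain ⟨A, V, hA, hV, hωA, hxV, hAV⟩ := isOpen_prod_iff.1 hO ω x hωx
  obtain ⟨_, ⟨ω', m, rfl⟩, hω', hcyl⟩ :=
    (PiNat.isTopologicalBasis_cylinders fun _ => Fin κ).exists_subset_of_mem_open hωA hA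
  rw [← PiNat.mem_cylinder_iff_eq.1 hω'] at hcyl
  obtain ⟨w, y, hyV, hy⟩ := hhit.exists_birkhoffAverageAlong_padWord_append_lt hf hfo hψ hψb hψi
    hμ hc ((List.range m).map ω) hV ⟨x, hxV⟩ N
  exact ⟨(padWord ((List.range m).map ω ++ w) i, y),
    hAV ⟨hcyl (padWord_range_map_append_mem_cylinder ω m w i), hyV⟩, hy⟩

theorem eventually_residual_frequently_birkhoffAverageAlong_lt (hhit : HitsInBoundedTime f)
    (hf : ∀ j, Continuous (f j)) (hfo : ∀ j, IsOpenMap (f j)) (hψ : Continuous ψ)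
    (hψb : BddAbove (Set.range ψ)) (hψi : Integrable ψ μ) (hμ : MeasurePreserving (f i) μ μ)
    (hc : ∫ x, ψ x ∂μ < c) :
    ∀ᶠ q in residual ((ℕ → Fin κ) × X), ∃ᶠ n in atTop, birkhoffAverageAlong f ψ q.1 n q.2 < c := by
  simp only [frequently_atTop]
  exact eventually_countable_forall.2 fun N => residual_of_dense_open
    (isOpen_exists_birkhoffAverageAlong_lt hf hψ c N)
    (hhit.dense_exists_birkhoffAverageAlong_lt (hf i) hfo hψ hψb hψi hμ hc N)

theorem eventually_residual_frequently_lt_birkhoffAverageAlong (hhit : HitsInBoundedTime f)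
    (hf : ∀ j, Continuous (f j)) (hfo : ∀ j, IsOpenMap (f j)) (hψ : Continuous ψ)
    (hψb : BddBelow (Set.range ψ)) (hψi : Integrable ψ μ) (hμ : MeasurePreserving (f i) μ μ)
    (hc : c < ∫ x, ψ x ∂μ) :
    ∀ᶠ q in residual ((ℕ → Fin κ) × X), ∃ᶠ n in atTop, c < birkhoffAverageAlong f ψ q.1 n q.2 := by
  have hneg := hhit.eventually_residual_frequently_birkhoffAverageAlong_lt hf hfo hψ.neg
    hψb.range_neg hψi.neg hμ (c := -c) (by simpa [integral_neg] using hc)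
  simpa only [birkhoffAverageAlong_neg, neg_lt_neg_iff] using hneg

end HitsInBoundedTime

end Genericity

section Irregularity

variable {X : Type*} [TopologicalSpace X] [MeasurableSpace X] [OpensMeasurableSpace X] {κ : ℕ}
  {f : Fin κ → X → X} {i₁ i₂ : Fin κ} {μ₁ μ₂ : Measure X} [IsProbabilityMeasure μ₁]
  [IsProbabilityMeasure μ₂]

theorem eventually_residual_mem_irregularSet (hf : ∀ i, Continuous (f i))
    (hfo : ∀ i, IsOpenMap (f i)) (hhit : HitsInBoundedTime f) (ψ : BoundedContinuousFunction X ℝ)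
    (hμ₁ : MeasurePreserving (f i₁) μ₁ μ₁) (hμ₂ : MeasurePreserving (f i₂) μ₂ μ₂)
    (hlt : ∫ x, ψ x ∂μ₁ < ∫ x, ψ x ∂μ₂) :
    ∀ᶠ q in residual ((ℕ → Fin κ) × X), q.2 ∈ irregularSet f ψ q.1 := by
  obtain ⟨a, ha, ha₂⟩ := exists_between hlt
  obtain ⟨b, hab, hb⟩ := exists_between ha₂
  filter_upwards [
    hhit.eventually_residual_frequently_birkhoffAverageAlong_lt hf hfo ψ.continuous
      ψ.isBounded_range.bddAbove (ψ.integrable μ₁) hμ₁ ha,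
    hhit.eventually_residual_frequently_lt_birkhoffAverageAlong hf hfo ψ.continuous
      ψ.isBounded_range.bddBelow (ψ.integrable μ₂) hμ₂ hb] with q hlow hhigh
  exact mem_irregularSet_of_frequently hab hlow hhigh

theorem irregular_residual_semigroup_general [SecondCountableTopology X]
    (hf : ∀ i, Continuous (f i)) (hfo : ∀ i, IsOpenMap (f i)) (hhit : HitsInBoundedTime f)
    (ψ : BoundedContinuousFunction X ℝ) (hμ₁ : MeasurePreserving (f i₁) μ₁ μ₁)
    (hμ₂ : MeasurePreserving (f i₂) μ₂ μ₂)
    (hlt : ∫ x, ψ x ∂μ₁ < ∫ x, ψ x ∂μ₂) :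
    {ω | irregularSet f ψ ω ∈ residual X} ∈ residual (ℕ → Fin κ) ∧
      {x | ∃ ω, x ∈ irregularSet f ψ ω} ∈ residual X := by
  have hres := eventually_residual_curry
    (eventually_residual_mem_irregularSet hf hfo hhit ψ hμ₁ hμ₂ hlt)
  have : Nonempty (Fin κ) := ⟨i₁⟩
  obtain ⟨ω, hω⟩ := (dense_of_mem_residual hres).nonempty
  exact ⟨hres, mem_of_superset hω fun x hx => ⟨ω, hx⟩⟩

end Irregularity

/-- **Baire genericity of irregular points for semigroup actions.**
Let `f₁, …, f_κ` be bi-Lipschitz homeomorphisms of a compact metric space `X` generating a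
semigroup action with frequent hitting times, and let `ψ` be continuous and not a coboundary
with respect to some generator. Then the set of `ω ∈ Σ_κ = {1,…,κ}^ℕ` for which the set of
points `x` with divergent Birkhoff averages along `ω` is residual in `X`, is itself a
residual subset of `Σ_κ`; and moreover the set `I_S(ψ)` of points which are Birkhoff
non-typical along some infinite word is residual in `X`. -/
theorem irregular_residual_semigroup {X : Type*} [MetricSpace X] [CompactSpace X]
    [MeasurableSpace X] [BorelSpace X] (κ : ℕ) (hκ : 1 ≤ κ)
    (f : Fin κ → X ≃ X)
    (hLip : ∀ i, ∃ L : NNReal, LipschitzWith L (f i))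
    (hLipInv : ∀ i, ∃ L : NNReal, LipschitzWith L (f i).symm)
    (ψ : X → ℝ) (hψ : Continuous ψ)
    (hfht : FrequentHittingTimes (fun i => (f i : X → X)))
    (hcob : ∃ i, NotCoboundary (f i : X → X) ψ) :
    {ω : ℕ → Fin κ |
        {x : X | ¬ ∃ l : ℝ, Tendsto
            (fun n : ℕ => (n : ℝ)⁻¹ *
              ∑ j ∈ Finset.range n, ψ (seqComp (fun i => (f i : X → X)) ω j x))
            atTop (nhds l)} ∈ residual X}
      ∈ residual (ℕ → Fin κ) ∧
    {x : X | ∃ ω : ℕ → Fin κ, ¬ ∃ l : ℝ, Tendsto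
        (fun n : ℕ => (n : ℝ)⁻¹ *
          ∑ j ∈ Finset.range n, ψ (seqComp (fun i => (f i : X → X)) ω j x))
        atTop (nhds l)} ∈ residual X := by
  have hf : ∀ i, Continuous (f i) := fun i => (hLip i).choose_spec.continuous
  have hfo : ∀ i, IsOpenMap (f i) := fun i =>
    (Homeomorph.mk (f i) (hf i) (hLipInv i).choose_spec.continuous).isOpenMap
  obtain ⟨i, μ₁, μ₂, _, _, hμ₁, hμ₂, hlt⟩ := hcob
  exact irregular_residual_semigroup_general hf hfo hfht.hitsInBoundedTime
    (BoundedContinuousFunction.mkOfCompact ⟨ψ, hψ⟩) ⟨(hf i).measurable, hμ₁⟩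
    ⟨(hf i).measurable, hμ₂⟩ hlt

end
end

section
/- Let (X,d) be a compact metric space, κ ≥ 1, and let f₁,…,f_κ : X → X be homeomorphisms. Suppose there is a nonempty subset S ⊆ {1,…,κ} such that f_i is an isometry of X for every i ∈ S and the subcollection {f_i : i ∈ S} satisfies property (C): for every ε > 0 there exists K(ε) ∈ ℕ such that for every x ∈ X there is an infinite word ω ∈ S^ℕ with ⋃_{j=0}^{K(ε)} f_ω^j(B(x,ε)) = X. Then the semigroup action generated by f₁,…,f_κ has frequent hitting times. -/
open Metric

noncomputable section

/-!
By property (C) at scale `ε / 2`, some iterate `g = f_ω^j` with `j ≤ K(ε / 2)` maps a point `v` of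
`B(x₁, ε/2)` to `x₂`. A surjective isometry maps `B(v, s)` onto the ball of radius `s` about the
image of `v`; all that matters is that it covers this ball, and this passes to compositions. Hence
`B(x₂, r/2) ⊆ g(B(v, r/2)) ⊆ g(B(x₁, ε))`, and `z = x₂` works.
-/

/-- A map is *co-Lipschitz with constant `1`* if the image of each ball contains the ball of the
same radius about the image of the centre. Among such maps are the surjective isometries, but also
non-injective ones such as the doubling map of the circle. -/
def IsCoLipschitzOne {X Y : Type*} [PseudoMetricSpace X] [PseudoMetricSpace Y] (g : X → Y) : Prop :=
  ∀ (x : X) (r : ℝ), ball (g x) r ⊆ g '' ball x r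

namespace IsCoLipschitzOne

variable {X Y Z : Type*} [PseudoMetricSpace X] [PseudoMetricSpace Y] [PseudoMetricSpace Z]

protected theorem id : IsCoLipschitzOne (id : X → X) := fun x r => by
  rw [Set.image_id, id]

theorem comp {h : Y → Z} {g : X → Y} (hh : IsCoLipschitzOne h) (hg : IsCoLipschitzOne g) :
    IsCoLipschitzOne (h ∘ g) := fun x r =>
  calc ball (h (g x)) r ⊆ h '' ball (g x) r := hh (g x) r
    _ ⊆ h '' (g '' ball x r) := Set.image_mono (hg x r)
    _ = (h ∘ g) '' ball x r := (Set.image_comp h g _).symm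

theorem of_antilipschitzWith_one {g : X → Y} (hg : AntilipschitzWith 1 g)
    (hsurj : Function.Surjective g) : IsCoLipschitzOne g := by
  intro x r y hy
  obtain ⟨v, rfl⟩ := hsurj y
  have hdist : dist v x ≤ dist (g v) (g x) := by simpa using hg.le_mul_dist v x
  exact Set.mem_image_of_mem g (hdist.trans_lt hy)

theorem ball_subset_image_ball_add {g : X → Y} (hg : IsCoLipschitzOne g) {x : X} {y : Y} {s : ℝ}
    (hy : y ∈ g '' ball x s) (r : ℝ) : ball y r ⊆ g '' ball x (s + r) := by
  obtain ⟨v, hv, rfl⟩ := hy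
  have hball : ball v r ⊆ ball x (s + r) :=
    ball_subset_ball' (by linarith [mem_ball.mp hv])
  exact (hg v r).trans (Set.image_mono hball)

end IsCoLipschitzOne

section Words

variable {X : Type*} {κ : ℕ} {f : Fin κ → X → X}

theorem wordComp_map_range (f : Fin κ → X → X) (ω : ℕ → Fin κ) (n : ℕ) :
    wordComp f ((List.range n).map ω) = seqComp f ω n := by
  induction n with
  | zero => rfl
  | succ n ih =>
    rw [seqComp, ← ih]
    funext x
    simp only [wordComp, List.range_succ, List.map_append, List.map_cons, List.map_nil,
      List.foldl_append, List.foldl_cons, List.foldl_nil, Function.comp_apply]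

theorem isCoLipschitzOne_seqComp [PseudoMetricSpace X] {ω : ℕ → Fin κ}
    (hf : ∀ n, IsCoLipschitzOne (f (ω n))) (n : ℕ) : IsCoLipschitzOne (seqComp f ω n) := by
  induction n with
  | zero => exact .id
  | succ n ih => exact (hf n).comp ih

/-- Property (C) for the subcollection `{f_i : i ∈ S}`: for each `ε > 0`, every ball `B(x, ε)`
covers `X` within a uniform number `K` of iterates along some infinite word, depending on `x`, with
letters in `S`. The index `j` runs over `0, …, K` inclusive. -/
def PropertyC [PseudoMetricSpace X] (f : Fin κ → X → X) (S : Set (Fin κ)) : Prop :=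
  ∀ ε : ℝ, 0 < ε → ∃ K : ℕ, ∀ x : X, ∃ ω : ℕ → Fin κ, (∀ n, ω n ∈ S) ∧
    (⋃ j ∈ Finset.range (K + 1), seqComp f ω j '' ball x ε) = Set.univ

theorem PropertyC.exists_mem_image_ball [PseudoMetricSpace X] {S : Set (Fin κ)}
    (hC : PropertyC f S) {ε : ℝ} (hε : 0 < ε) :
    ∃ K : ℕ, ∀ x y : X, ∃ ω : ℕ → Fin κ, (∀ n, ω n ∈ S) ∧
      ∃ j ≤ K, y ∈ seqComp f ω j '' ball x ε := by
  obtain ⟨K, hK⟩ := hC ε hε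
  refine ⟨K, fun x y => ?_⟩
  obtain ⟨ω, hωS, hcover⟩ := hK x
  obtain ⟨j, hj, hy⟩ := Set.mem_iUnion₂.mp (hcover.symm ▸ Set.mem_univ y)
  exact ⟨ω, hωS, j, Finset.mem_range_succ_iff.mp hj, hy⟩

theorem frequentHittingTimes_of_isometries_propertyC_general [MetricSpace X] {S : Set (Fin κ)}
    (hf : ∀ i ∈ S, IsCoLipschitzOne (f i)) (hC : PropertyC f S) : FrequentHittingTimes f := by
  intro ε hε
  obtain ⟨K, hK⟩ := hC.exists_mem_image_ball (half_pos hε)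
  refine ⟨K, fun x₁ x₂ r hr hrε => ?_⟩
  obtain ⟨ω, hωS, j, hjK, hx₂⟩ := hK x₁ x₂
  have hexpand : IsCoLipschitzOne (seqComp f ω j) :=
    isCoLipschitzOne_seqComp (fun n => hf (ω n) (hωS n)) j
  have hhit : ball x₂ (r / 2) ⊆ seqComp f ω j '' ball x₁ ε :=
    (hexpand.ball_subset_image_ball_add hx₂ (r / 2)).trans
      (Set.image_mono (ball_subset_ball (by linarith)))
  refine ⟨j, hjK, (List.range j).map ω, by rw [List.length_map, List.length_range], x₂, ?_⟩
  rw [wordComp_map_range]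
  exact Set.subset_inter hhit (ball_subset_ball (half_le_self hr.le))

end Words

/-- **A sub-collection of isometries with the covering property (C) forces frequent
hitting times.** If `f₁, …, f_κ` are homeomorphisms of a compact metric space and there is a
nonempty `S ⊆ {1,…,κ}` such that each `f_i`, `i ∈ S`, is an isometry and the sub-collection
satisfies property (C) — for every `ε > 0` there is `K(ε)` such that every `ε`-ball covers
`X` within `K(ε)` iterates along some infinite word with letters in `S` — then the whole
semigroup action has frequent hitting times. -/
theorem frequentHittingTimes_of_isometries_propertyC {X : Type*} [MetricSpace X]
    [CompactSpace X] (κ : ℕ) (f : Fin κ → X ≃ₜ X)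
    (S : Set (Fin κ)) (hS : S.Nonempty)
    (hiso : ∀ i ∈ S, Isometry (f i : X → X))
    (hC : ∀ ε : ℝ, 0 < ε → ∃ K : ℕ, ∀ x : X, ∃ ω : ℕ → Fin κ, (∀ n, ω n ∈ S) ∧
      (⋃ j ∈ Finset.range (K + 1),
        seqComp (fun i => (f i : X → X)) ω j '' Metric.ball x ε) = Set.univ) :
    FrequentHittingTimes (fun i => (f i : X → X)) := by
  exact frequentHittingTimes_of_isometries_propertyC_general
    (fun i hi => .of_antilipschitzWith_one (hiso i hi).antilipschitz (f i).surjective) hC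

end
end

section
/- Let (X,d) be a compact metric space and let f : X → X be a minimal isometry, i.e. d(f(x),f(y)) = d(x,y) for all x,y ∈ X and for every x ∈ X the forward orbit {f^n(x) : n ≥ 0} is dense in X. Then f has frequent hitting times. -/
/-!
A minimal isometry is onto, so its iterates carry balls onto balls of the same radius. By
compactness of `X × X`, the time needed to bring `x₁` within `ε / 2` of `x₂` is bounded uniformly
in both points; at such a time `p`, the image of `B(x₁, ε)` is `B(f^p x₁, ε)`, which contains
`B(x₂, ε / 2)`. Hence `z = x₂` works for every radius `r ≤ ε / 2`.
-/

open Metric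

noncomputable section

/-- A single continuous map `f` of a metric space has *frequent hitting times*:
for every `ε > 0` there is `K(ε)` such that for all `x₁, x₂ ∈ X` and every radius
`0 < r ≤ ε/2` there are `0 ≤ p ≤ K(ε)` and a point `z` with
`B(z, r/2) ⊆ f^p(B(x₁,ε)) ∩ B(x₂,r)`. -/
def FrequentHittingTimesMap {X : Type*} [MetricSpace X] (f : X → X) : Prop :=
  ∀ ε : ℝ, 0 < ε → ∃ K : ℕ, ∀ x₁ x₂ : X, ∀ r : ℝ, 0 < r → r ≤ ε / 2 →
    ∃ p ≤ K, ∃ z : X,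
      Metric.ball z (r / 2) ⊆ f^[p] '' Metric.ball x₁ ε ∩ Metric.ball x₂ r

theorem isometry_iterate {X : Type*} [PseudoEMetricSpace X] {f : X → X} (hf : Isometry f) :
    ∀ n : ℕ, Isometry f^[n]
  | 0 => isometry_id
  | n + 1 => (isometry_iterate hf n).comp hf

theorem image_ball_of_isometry_of_surjective {X Y : Type*} [PseudoMetricSpace X]
    [PseudoMetricSpace Y] {f : X → Y} (hf : Isometry f) (hsurj : Function.Surjective f)
    (x : X) (r : ℝ) : f '' ball x r = ball (f x) r := by
  rw [← hf.preimage_ball, Set.image_preimage_eq _ hsurj]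

theorem denseRange_of_denseRange_iterate {X : Type*} [TopologicalSpace X] {f : X → X} {x : X}
    (hx : DenseRange fun n : ℕ => f^[n] (f x)) : DenseRange f := by
  have horbit : (fun n : ℕ => f^[n] (f x)) = f ∘ fun n : ℕ => f^[n] x :=
    funext fun n => (Function.Commute.iterate_self f n) x
  rw [horbit] at hx
  exact hx.of_comp

theorem surjective_of_denseRange_iterate {X : Type*} [TopologicalSpace X] {f : X → X} {x : X}
    (hf : IsClosed (Set.range f)) (hx : DenseRange fun n : ℕ => f^[n] (f x)) :
    Function.Surjective f := by
  rw [← Set.range_eq_univ, ← hf.closure_eq]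
  exact (denseRange_of_denseRange_iterate hx).closure_range

open scoped Uniformity in
theorem exists_finset_forall_exists_mem_uniformity {ι X Y : Type*} [TopologicalSpace X]
    [CompactSpace X] [UniformSpace Y] [CompactSpace Y] {g : ι → X → Y}
    (hg : ∀ i, Continuous (g i)) (hdense : ∀ x, DenseRange fun i => g i x)
    {V : Set (Y × Y)} (hV : V ∈ 𝓤 Y) :
    ∃ t : Finset ι, ∀ x y, ∃ i ∈ t, (g i x, y) ∈ V := by
  let U (i : ι) : Set (X × Y) := {q | (g i q.1, q.2) ∈ interior V}
  have hU_open (i : ι) : IsOpen (U i) :=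
    isOpen_interior.preimage (((hg i).comp continuous_fst).prodMk continuous_snd)
  have hU_cover : Set.univ ⊆ ⋃ i, U i := fun ⟨x, y⟩ _ => by
    have hopen : IsOpen {z | (z, y) ∈ interior V} := isOpen_interior.preimage (by fun_prop)
    obtain ⟨i, hi⟩ := (hdense x).exists_mem_open hopen
      ⟨y, refl_mem_uniformity (interior_mem_uniformity hV)⟩
    exact Set.mem_iUnion.2 ⟨i, hi⟩
  obtain ⟨t, ht⟩ := isCompact_univ.elim_finite_subcover U hU_open hU_cover
  refine ⟨t, fun x y => ?_⟩
  obtain ⟨i, hit, hi⟩ := Set.mem_iUnion₂.1 (ht (Set.mem_univ (x, y)))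
  exact ⟨i, hit, interior_subset hi⟩

theorem exists_nat_forall_exists_le_dist_iterate_lt {X : Type*} [PseudoMetricSpace X]
    [CompactSpace X] {f : X → X} (hf : Continuous f)
    (hmin : ∀ x : X, DenseRange fun n : ℕ => f^[n] x) {δ : ℝ} (hδ : 0 < δ) :
    ∃ K : ℕ, ∀ x y : X, ∃ p ≤ K, dist (f^[p] x) y < δ := by
  obtain ⟨t, ht⟩ := exists_finset_forall_exists_mem_uniformity hf.iterate hmin
    (dist_mem_uniformity hδ)
  obtain ⟨K, hK⟩ := t.exists_le
  refine ⟨K, fun x y => ?_⟩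
  obtain ⟨p, hpt, hp⟩ := ht x y
  exact ⟨p, hK p hpt, hp⟩

theorem exists_nat_forall_exists_le_ball_subset_image_iterate {X : Type*} [PseudoMetricSpace X]
    [CompactSpace X] {f : X → X} (hf : Isometry f) (hsurj : Function.Surjective f)
    (hmin : ∀ x : X, DenseRange fun n : ℕ => f^[n] x) {δ ε : ℝ} (hδε : δ < ε) :
    ∃ K : ℕ, ∀ x y : X, ∃ p ≤ K, ball y δ ⊆ f^[p] '' ball x ε := by
  obtain ⟨K, hK⟩ :=
    exists_nat_forall_exists_le_dist_iterate_lt hf.continuous hmin (sub_pos.2 hδε)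
  refine ⟨K, fun x y => ?_⟩
  obtain ⟨p, hpK, hp⟩ := hK x y
  refine ⟨p, hpK, ?_⟩
  rw [image_ball_of_isometry_of_surjective (isometry_iterate hf p) (hsurj.iterate p)]
  rw [dist_comm] at hp
  exact ball_subset_ball' (by linarith)

/-- **Minimal isometries have frequent hitting times.** If `f` is an isometry of a compact
metric space all of whose forward orbits are dense, then `f` has frequent hitting times. -/
theorem frequentHittingTimes_of_minimal_isometry {X : Type*} [MetricSpace X]
    [CompactSpace X] (f : X → X) (hiso : Isometry f)
    (hmin : ∀ x : X, Dense (Set.range fun n : ℕ => f^[n] x)) :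
    FrequentHittingTimesMap f := by
  intro ε hε
  have hsurj : Function.Surjective f := fun y =>
    surjective_of_denseRange_iterate (isCompact_range hiso.continuous).isClosed (hmin (f y)) y
  obtain ⟨K, hK⟩ :=
    exists_nat_forall_exists_le_ball_subset_image_iterate hiso hsurj hmin (half_lt_self hε)
  refine ⟨K, fun x₁ x₂ r hr hrε => ?_⟩
  obtain ⟨p, hpK, hp⟩ := hK x₁ x₂
  have hball : ball x₂ (r / 2) ⊆ ball x₂ r := ball_subset_ball (half_le_self hr.le)
  exact ⟨p, hpK, x₂, Set.subset_inter ((hball.trans (ball_subset_ball hrε)).trans hp) hball⟩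

end
end

section
/- Let 𝕊¹ = ℝ/ℤ be the circle equipped with its quotient metric, and let α ∈ ℝ be irrational. Then the rotation R_α : 𝕊¹ → 𝕊¹ given by R_α(x) = x + α (mod 1) has frequent hitting times. -/
/-! A surjective isometry `f` carries the first `K` points of the orbit of `x₀` isometrically onto
the first `K` points of the orbit of `f^m x₀`, so if the former are a `δ`-net of the space, so are
the latter. When the orbit of `x₀` is dense, this bounds the number of steps needed to come close to
a given target uniformly in the starting point. Since `f^p (B(x₁, ε)) = B(f^p x₁, ε)`, bringing
`f^p x₁` within `ε / 2` of `x₂` puts the whole ball `B(x₂, r)` inside the image. For an irrational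
rotation the forward orbit of `0` is dense. -/

open Metric

noncomputable section

theorem exists_forall_exists_le_dist_lt_of_denseRange {X ι : Type*} [PseudoMetricSpace X]
    [Preorder ι] [IsDirectedOrder ι] [Nonempty ι] (hX : TotallyBounded (Set.univ : Set X))
    {u : ι → X} (hu : DenseRange u) {δ : ℝ} (hδ : 0 < δ) :
    ∃ K : ι, ∀ y : X, ∃ p ≤ K, dist y (u p) < δ := by
  obtain ⟨t, ht, hcover⟩ := totallyBounded_iff.1 hX (δ / 2) (half_pos hδ)
  choose n hn using fun c : X => hu.exists_dist_lt c (half_pos hδ)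
  obtain ⟨K, hK⟩ := (ht.image n).bddAbove
  refine ⟨K, fun y => ?_⟩
  obtain ⟨c, hct, hyc⟩ := Set.mem_iUnion₂.1 (hcover (Set.mem_univ y))
  refine ⟨n c, hK (Set.mem_image_of_mem n hct), ?_⟩
  calc
    dist y (u (n c)) ≤ dist y c + dist c (u (n c)) := dist_triangle _ _ _
    _ < δ / 2 + δ / 2 := add_lt_add hyc (hn c)
    _ = δ := add_halves δ

theorem exists_forall_exists_le_dist_iterate_lt {X : Type*} [PseudoMetricSpace X]
    (hX : TotallyBounded (Set.univ : Set X)) (f : X ≃ᵢ X) {x₀ : X}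
    (hx₀ : DenseRange fun n : ℕ => f^[n] x₀) {δ : ℝ} (hδ : 0 < δ) :
    ∃ K : ℕ, ∀ x y : X, ∃ p ≤ K, dist y (f^[p] x) < δ := by
  obtain ⟨K, hK⟩ := exists_forall_exists_le_dist_lt_of_denseRange hX hx₀ (half_pos hδ)
  refine ⟨K, fun x y => ?_⟩
  obtain ⟨m, hm⟩ := hx₀.exists_dist_lt x (half_pos hδ)
  obtain ⟨w, rfl⟩ := f.surjective.iterate m y
  obtain ⟨p, hpK, hp⟩ := hK w
  refine ⟨p, hpK, ?_⟩
  have hcomm : f^[m] (f^[p] x₀) = f^[p] (f^[m] x₀) := Function.Commute.iterate_iterate_self f m p x₀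
  calc
    dist (f^[m] w) (f^[p] x)
      ≤ dist (f^[m] w) (f^[m] (f^[p] x₀)) + dist (f^[p] (f^[m] x₀)) (f^[p] x) :=
        hcomm ▸ dist_triangle _ _ _
    _ = dist w (f^[p] x₀) + dist x (f^[m] x₀) := by
        rw [(isometry_iterate f.isometry m).dist_eq, (isometry_iterate f.isometry p).dist_eq,
          dist_comm x]
    _ < δ / 2 + δ / 2 := add_lt_add hp hm
    _ = δ := add_halves δ

theorem frequentHittingTimes_irrational_rotation_general {X : Type*} [MetricSpace X]
    (hX : TotallyBounded (Set.univ : Set X)) (f : X ≃ᵢ X) {x₀ : X}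
    (hx₀ : DenseRange fun n : ℕ => f^[n] x₀) : FrequentHittingTimesMap f := by
  intro ε hε
  obtain ⟨K, hK⟩ := exists_forall_exists_le_dist_iterate_lt hX f hx₀ (half_pos hε)
  refine ⟨K, fun x₁ x₂ r hr hrε => ?_⟩
  obtain ⟨p, hpK, hp⟩ := hK x₁ x₂
  have himage : f^[p] '' ball x₁ ε = ball (f^[p] x₁) ε := by
    rw [← (isometry_iterate f.isometry p).preimage_ball,
      Set.image_preimage_eq _ (f.surjective.iterate p)]
  refine ⟨p, hpK, x₂, Set.subset_inter ?_ (ball_subset_ball (half_le_self hr.le))⟩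
  rw [himage]
  exact ball_subset_ball' (by linarith)

theorem denseRange_iterate_add_coe_addCircle {p a : ℝ} [Fact (0 < p)] (ha : Irrational (a / p)) :
    DenseRange fun n : ℕ => (fun x : AddCircle p => x + (a : AddCircle p))^[n] 0 := by
  simp only [add_right_iterate_apply_zero]
  exact denseRange_zsmul_iff_nsmul.1 (AddCircle.denseRange_zsmul_coe_iff.2 ha)

/-- **Irrational circle rotations have frequent hitting times.** On the circle
`𝕊¹ = ℝ/ℤ` with its quotient metric, the rotation `R_α(x) = x + α (mod 1)` by an
irrational number `α` has frequent hitting times. -/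
theorem frequentHittingTimes_irrational_rotation (α : ℝ) (hα : Irrational α) :
    FrequentHittingTimesMap (fun x : AddCircle (1 : ℝ) => x + (α : AddCircle (1 : ℝ))) := by
  exact frequentHittingTimes_irrational_rotation_general isCompact_univ.totallyBounded
    (IsometryEquiv.addRight (α : AddCircle (1 : ℝ)))
    (denseRange_iterate_add_coe_addCircle (by rwa [div_one]))

end
end
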